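/- arXiv:1804.10224 — 9 statements merged into one kernel-verified Lean document; each statement's English description precedes it below -/
import Mathlib

section
/- Suppose the sequences S_n(t), S̄_n(t) ∈ ℂ^N, v_n(t) ∈ ℂ, ψ_n(t) ∈ ℂ, φ_n(t), χ_n(t) ∈ ℂ^N (n ∈ ℤ, t ∈ ℝ, all differentiable in t) satisfy, for all n and t, the spectral problem (YO-L) and the time evolution (YO-M). Then for all n and t the following three identities hold: (i) [i S̄_{n,t} + v_n(S̄_{n+1} + S̄_{n−1}) − c S̄_n](ψ_{n+1} + ψ_{n−1}) = 0 (an identity in ℂ^N); (ii) [i S_{n,t} − v_n(S_{n+1} + S_{n−1}) + c S_n](ψ_{n+1} + ψ_{n−1}) = 0 (an identity in ℂ^N); (iii) i[v_{n,t} − (1/2) v_n Δ⁺(⟨S_n, S̄_{n−1}⟩ + ⟨S_{n−1}, S̄_n⟩)](ψ_{n+1} + ψ_{n−1}) + ⟨i S_{n,t} − v_n(S_{n+1} + S_{n−1}) + c S_n, φ_n⟩ + ⟨χ_n, i S̄_{n,t} + v_n(S̄_{n+1} + S̄_{n−1}) − c S̄_n⟩ = 0. -/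
open Complex BigOperators

/-- Bilinear pairing on `ℂ^N` (no complex conjugation). -/
noncomputable def pair {N : ℕ} (a b : Fin N → ℂ) : ℂ := ∑ k, a k * b k

/-!
The three identities are the compatibility condition of (YO-L) and (YO-M). Differentiate (YO-L) in
`t` and eliminate the derivatives of `ψ`, `φ`, `χ` by (YO-M). The factors `v_{n±1}` enter the
result only through `v_{n+1} (ψ_{n+2} + ψ_n) + v_{n-1} (ψ_n + ψ_{n-2})`. In (i) and (ii) this sum
cancels between the derivative of `ψ_{n+1} + ψ_{n-1}` and that of `φ_{n+1} - φ_n` or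
`χ_{n+1} + χ_n`. In (iii) it is evaluated by adding the first equation of (YO-L) at `n + 1` and
`n - 1` and expressing `φ_{n±1}`, `χ_{n±1}` through `φ_n`, `χ_n` by the other two.
-/

namespace YajimaOikawa

section Algebra

variable {E F : Type*} [AddCommGroup E] [Module ℂ E] [AddCommGroup F] [Module ℂ F]

/-- The spectral problem (YO-L) at a fixed time, with `ℂ^N` and its bilinear pairing replaced by two
spaces `E ∋ S_n, χ_n` and `F ∋ S̄_n, φ_n` and an arbitrary bilinear form `B` on `E × F`. -/
structure SpectralProblem (B : E →ₗ[ℂ] F →ₗ[ℂ] ℂ) (lam : ℂ) (S : ℤ → E) (Sb : ℤ → F)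
    (v ψ : ℤ → ℂ) (φ : ℤ → F) (χ : ℤ → E) : Prop where
  psi_eq (n : ℤ) : v n * (ψ (n + 1) + ψ (n - 1)) = lam * ψ n - B (S n) (φ n) - B (χ n) (Sb n)
  phi_sub (n : ℤ) : φ (n + 1) - φ n = ((I / 2) * (ψ (n + 1) + ψ (n - 1))) • Sb n
  chi_add (n : ℤ) : χ (n + 1) + χ n = ((I / 2) * (ψ (n + 1) + ψ (n - 1))) • S n

/-- The linearization of `SpectralProblem` in the direction of the primed sequences, `lam` being
kept fixed: the relations that (YO-L) imposes on the time derivatives. -/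
structure LinearizedSpectralProblem (B : E →ₗ[ℂ] F →ₗ[ℂ] ℂ) (lam : ℂ) (S : ℤ → E) (Sb : ℤ → F)
    (v ψ : ℤ → ℂ) (φ : ℤ → F) (χ : ℤ → E) (S' : ℤ → E) (Sb' : ℤ → F) (v' ψ' : ℤ → ℂ)
    (φ' : ℤ → F) (χ' : ℤ → E) : Prop where
  psi_eq (n : ℤ) :
    v' n * (ψ (n + 1) + ψ (n - 1)) + v n * (ψ' (n + 1) + ψ' (n - 1)) =
      lam * ψ' n - (B (S n) (φ' n) + B (S' n) (φ n)) - (B (χ n) (Sb' n) + B (χ' n) (Sb n))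
  phi_sub (n : ℤ) :
    φ' (n + 1) - φ' n = ((I / 2) * (ψ (n + 1) + ψ (n - 1))) • Sb' n +
      ((I / 2) * (ψ' (n + 1) + ψ' (n - 1))) • Sb n
  chi_add (n : ℤ) :
    χ' (n + 1) + χ' n = ((I / 2) * (ψ (n + 1) + ψ (n - 1))) • S' n +
      ((I / 2) * (ψ' (n + 1) + ψ' (n - 1))) • S n

/-- The time evolution (YO-M) at a fixed time, the primed sequences standing for the time
derivatives. -/
structure TimeEvolution (c : ℂ) (S : ℤ → E) (Sb : ℤ → F) (v ψ : ℤ → ℂ) (χ : ℤ → E)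
    (ψ' : ℤ → ℂ) (φ' : ℤ → F) (χ' : ℤ → E) : Prop where
  psi_deriv (n : ℤ) : I * ψ' n = v n * (ψ (n + 1) + ψ (n - 1)) - c * ψ n
  phi_deriv (n : ℤ) :
    φ' n = ((1 / 2) * v n * (ψ (n + 1) + ψ (n - 1))) • Sb (n - 1) -
      ((1 / 2) * v (n - 1) * (ψ n + ψ (n - 2))) • Sb n
  chi_deriv (n : ℤ) :
    χ' n = ((1 / 2) * v n * (ψ (n + 1) + ψ (n - 1))) • S (n - 1) +
      ((1 / 2) * v (n - 1) * (ψ n + ψ (n - 2))) • S n + (2 * I * c) • χ n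

variable {B : E →ₗ[ℂ] F →ₗ[ℂ] ℂ} {lam c : ℂ} {S : ℤ → E} {Sb : ℤ → F} {v ψ : ℤ → ℂ}
  {φ : ℤ → F} {χ : ℤ → E} {S' : ℤ → E} {Sb' : ℤ → F} {v' ψ' : ℤ → ℂ} {φ' : ℤ → F} {χ' : ℤ → E}

namespace SpectralProblem

/-- The terms `B (S_{n-1}) (S̄_{n-1})` produced by transporting `φ_{n-1}` and `χ_{n-1}` to `n`
cancel, which is why `ψ_{n-2}` does not appear on the right. -/
lemma v_mul_neighbor_sum (h : SpectralProblem B lam S Sb v ψ φ χ) (n : ℤ) :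
    v (n + 1) * (ψ (n + 2) + ψ n) + v (n - 1) * (ψ n + ψ (n - 2)) =
      lam * (ψ (n + 1) + ψ (n - 1)) - B (S (n + 1) + S (n - 1)) (φ n) +
        B (χ n) (Sb (n + 1) + Sb (n - 1)) -
        (I / 2) * (ψ (n + 1) + ψ (n - 1)) * (B (S (n + 1)) (Sb n) + B (S n) (Sb (n + 1))) := by
  have psi_succ := h.psi_eq (n + 1)
  have psi_pred := h.psi_eq (n - 1)
  have phi_pred := h.phi_sub (n - 1)
  have chi_pred := h.chi_add (n - 1)
  simp only [add_sub_cancel_right, sub_add_cancel, add_assoc, sub_sub, one_add_one_eq_two]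
    at psi_succ psi_pred phi_pred chi_pred
  rw [eq_add_of_sub_eq (h.phi_sub n), eq_sub_of_add_eq (h.chi_add n)] at psi_succ
  rw [eq_sub_of_add_eq' (sub_eq_iff_eq_add.mp phi_pred).symm, eq_sub_of_add_eq' chi_pred]
    at psi_pred
  simp only [map_add, map_sub, map_smul, LinearMap.add_apply, LinearMap.sub_apply,
    LinearMap.smul_apply, smul_eq_mul] at psi_succ psi_pred ⊢
  linear_combination psi_succ + psi_pred

end SpectralProblem

namespace TimeEvolution

lemma psi_deriv_neighbor_sum (h : TimeEvolution c S Sb v ψ χ ψ' φ' χ') (n : ℤ) :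
    I * (ψ' (n + 1) + ψ' (n - 1)) =
      v (n + 1) * (ψ (n + 2) + ψ n) + v (n - 1) * (ψ n + ψ (n - 2)) -
        c * (ψ (n + 1) + ψ (n - 1)) := by
  have psi_succ := h.psi_deriv (n + 1)
  have psi_pred := h.psi_deriv (n - 1)
  simp only [add_sub_cancel_right, sub_add_cancel, add_assoc, sub_sub, one_add_one_eq_two]
    at psi_succ psi_pred
  linear_combination psi_succ + psi_pred

lemma phi_deriv_sub (h : TimeEvolution c S Sb v ψ χ ψ' φ' χ') (n : ℤ) :
    φ' (n + 1) - φ' n =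
      ((1 / 2) * (v (n + 1) * (ψ (n + 2) + ψ n) + v (n - 1) * (ψ n + ψ (n - 2)))) • Sb n -
        ((1 / 2) * v n * (ψ (n + 1) + ψ (n - 1))) • (Sb (n + 1) + Sb (n - 1)) := by
  have phi_succ := h.phi_deriv (n + 1)
  rw [add_sub_cancel_right, add_assoc, one_add_one_eq_two, show n + 1 - 2 = n - 1 by ring]
    at phi_succ
  rw [phi_succ, h.phi_deriv n]
  module

lemma chi_deriv_add (h : TimeEvolution c S Sb v ψ χ ψ' φ' χ') (n : ℤ) :
    χ' (n + 1) + χ' n =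
      ((1 / 2) * (v (n + 1) * (ψ (n + 2) + ψ n) + v (n - 1) * (ψ n + ψ (n - 2)))) • S n +
        ((1 / 2) * v n * (ψ (n + 1) + ψ (n - 1))) • (S (n + 1) + S (n - 1)) +
        (2 * I * c) • (χ (n + 1) + χ n) := by
  have chi_succ := h.chi_deriv (n + 1)
  rw [add_sub_cancel_right, add_assoc n, one_add_one_eq_two, show n + 1 - 2 = n - 1 by ring]
    at chi_succ
  rw [chi_succ, h.chi_deriv n]
  module

lemma pairing_deriv_add (h : TimeEvolution c S Sb v ψ χ ψ' φ' χ') (n : ℤ) :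
    B (S n) (φ' n) + B (χ' n) (Sb n) =
      (1 / 2) * v n * (ψ (n + 1) + ψ (n - 1)) * (B (S n) (Sb (n - 1)) + B (S (n - 1)) (Sb n)) +
        2 * I * c * B (χ n) (Sb n) := by
  rw [h.phi_deriv n, h.chi_deriv n]
  simp only [map_add, map_sub, map_smul, LinearMap.add_apply, LinearMap.smul_apply, smul_eq_mul]
  ring

end TimeEvolution

namespace LinearizedSpectralProblem

lemma smul_Sb_evolution_eq_zero
    (hL' : LinearizedSpectralProblem B lam S Sb v ψ φ χ S' Sb' v' ψ' φ' χ')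
    (hM : TimeEvolution c S Sb v ψ χ ψ' φ' χ') (n : ℤ) :
    (ψ (n + 1) + ψ (n - 1)) • (I • Sb' n + v n • (Sb (n + 1) + Sb (n - 1)) - c • Sb n) = 0 := by
  linear_combination (norm := module)
    (2 : ℂ) • (hM.phi_deriv_sub n - hL'.phi_sub n) - hM.psi_deriv_neighbor_sum n • Sb n

lemma smul_S_evolution_eq_zero (hL : SpectralProblem B lam S Sb v ψ φ χ)
    (hL' : LinearizedSpectralProblem B lam S Sb v ψ φ χ S' Sb' v' ψ' φ' χ')
    (hM : TimeEvolution c S Sb v ψ χ ψ' φ' χ') (n : ℤ) :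
    (ψ (n + 1) + ψ (n - 1)) • (I • S' n - v n • (S (n + 1) + S (n - 1)) + c • S n) = 0 := by
  have chi_term : (2 * I * c) • (χ (n + 1) + χ n) = -(c * (ψ (n + 1) + ψ (n - 1))) • S n := by
    rw [hL.chi_add n, smul_smul]
    congr 1
    linear_combination c * (ψ (n + 1) + ψ (n - 1)) * I_mul_I
  have chi_deriv := hM.chi_deriv_add n
  rw [chi_term] at chi_deriv
  linear_combination (norm := module)
    (2 : ℂ) • (chi_deriv - hL'.chi_add n) - hM.psi_deriv_neighbor_sum n • S n

lemma v_evolution_add_pairing_eq_zero (hL : SpectralProblem B lam S Sb v ψ φ χ)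
    (hL' : LinearizedSpectralProblem B lam S Sb v ψ φ χ S' Sb' v' ψ' φ' χ')
    (hM : TimeEvolution c S Sb v ψ χ ψ' φ' χ') (n : ℤ) :
    I * (v' n - (1 / 2) * v n * ((B (S (n + 1)) (Sb n) + B (S n) (Sb (n + 1))) -
          (B (S n) (Sb (n - 1)) + B (S (n - 1)) (Sb n)))) * (ψ (n + 1) + ψ (n - 1)) +
        B (I • S' n - v n • (S (n + 1) + S (n - 1)) + c • S n) (φ n) +
        B (χ n) (I • Sb' n + v n • (Sb (n + 1) + Sb (n - 1)) - c • Sb n) = 0 := by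
  have psi_deriv_sum := hM.psi_deriv_neighbor_sum n
  rw [hL.v_mul_neighbor_sum n] at psi_deriv_sum
  simp only [map_add, map_sub, map_smul, LinearMap.add_apply, LinearMap.sub_apply,
    LinearMap.smul_apply, smul_eq_mul] at psi_deriv_sum ⊢
  linear_combination I * hL'.psi_eq n - I * hM.pairing_deriv_add (B := B) n + lam * hM.psi_deriv n -
    v n * psi_deriv_sum + c * hL.psi_eq n - 2 * c * B (χ n) (Sb n) * I_mul_I

end LinearizedSpectralProblem

end Algebra

section Analysis

variable {E F : Type*} [NormedAddCommGroup E] [NormedSpace ℂ E] [NormedAddCommGroup F]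
  [NormedSpace ℂ F]

lemma LinearizedSpectralProblem.of_hasDerivAt {B : E →L[ℂ] F →L[ℂ] ℂ} {lam : ℂ}
    {S χ : ℤ → ℝ → E} {Sb φ : ℤ → ℝ → F} {v ψ : ℤ → ℝ → ℂ}
    {S' χ' : ℤ → E} {Sb' φ' : ℤ → F} {v' ψ' : ℤ → ℂ} {t : ℝ}
    (hL : ∀ s, SpectralProblem B.toLinearMap₁₂ lam (S · s) (Sb · s) (v · s) (ψ · s) (φ · s) (χ · s))
    (hS : ∀ n, HasDerivAt (S n) (S' n) t) (hSb : ∀ n, HasDerivAt (Sb n) (Sb' n) t)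
    (hv : ∀ n, HasDerivAt (v n) (v' n) t) (hψ : ∀ n, HasDerivAt (ψ n) (ψ' n) t)
    (hφ : ∀ n, HasDerivAt (φ n) (φ' n) t) (hχ : ∀ n, HasDerivAt (χ n) (χ' n) t) :
    LinearizedSpectralProblem B.toLinearMap₁₂ lam (S · t) (Sb · t) (v · t) (ψ · t) (φ · t) (χ · t)
      S' Sb' v' ψ' φ' χ' := by
  have hψ_sum (n : ℤ) :
      HasDerivAt (fun s => ψ (n + 1) s + ψ (n - 1) s) (ψ' (n + 1) + ψ' (n - 1)) t :=
    (hψ (n + 1)).fun_add (hψ (n - 1))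
  have hB {x : ℝ → E} {y : ℝ → F} {x' : E} {y' : F} (hx : HasDerivAt x x' t)
      (hy : HasDerivAt y y' t) :
      HasDerivAt (fun s => B (x s) (y s)) (B (x t) y' + B x' (y t)) t :=
    (B.bilinearRestrictScalars ℝ).hasDerivAt_of_bilinear (fun _ => hx) (fun _ => hy)
  refine ⟨fun n => ?_, fun n => ?_, fun n => ?_⟩
  · refine ((hv n).fun_mul (hψ_sum n)).unique ?_
    rw [funext fun s => (hL s).psi_eq n]
    exact (((hψ n).const_mul lam).fun_sub (hB (hS n) (hφ n))).fun_sub (hB (hχ n) (hSb n))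
  · refine ((hφ (n + 1)).fun_sub (hφ n)).unique ?_
    rw [funext fun s => (hL s).phi_sub n]
    exact ((hψ_sum n).const_mul (I / 2)).fun_smul (hSb n)
  · refine ((hχ (n + 1)).fun_add (hχ n)).unique ?_
    rw [funext fun s => (hL s).chi_add n]
    exact ((hψ_sum n).const_mul (I / 2)).fun_smul (hS n)

/-- The bilinear pairing `pair` of `ℂ^N` as a continuous bilinear map, the form in which it can
serve as `B`. -/
noncomputable def pairing (N : ℕ) : (Fin N → ℂ) →L[ℂ] (Fin N → ℂ) →L[ℂ] ℂ :=
  (dotProductBilin ℂ ℂ).toContinuousBilinearMap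

lemma pairing_apply {N : ℕ} (a b : Fin N → ℂ) : pairing N a b = pair a b := rfl

end Analysis

end YajimaOikawa

open YajimaOikawa in
theorem stmt0_general {E F : Type*} [NormedAddCommGroup E] [NormedSpace ℂ E]
    [NormedAddCommGroup F] [NormedSpace ℂ F] (B : E →L[ℂ] F →L[ℂ] ℂ)
    (S : ℤ → ℝ → E) (Sb : ℤ → ℝ → F) (v ψ : ℤ → ℝ → ℂ) (φ : ℤ → ℝ → F) (χ : ℤ → ℝ → E)
    (c : ℝ → ℂ) (lam : ℂ)
    (hSd : ∀ n, Differentiable ℝ (S n)) (hSbd : ∀ n, Differentiable ℝ (Sb n))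
    (hvd : ∀ n, Differentiable ℝ (v n)) (hψd : ∀ n, Differentiable ℝ (ψ n))
    (hφd : ∀ n, Differentiable ℝ (φ n)) (hχd : ∀ n, Differentiable ℝ (χ n))
    (hL : ∀ t, SpectralProblem B.toLinearMap₁₂ lam (S · t) (Sb · t) (v · t) (ψ · t) (φ · t) (χ · t))
    (hM : ∀ t, TimeEvolution (c t) (S · t) (Sb · t) (v · t) (ψ · t) (χ · t)
      (fun n => deriv (ψ n) t) (fun n => deriv (φ n) t) (fun n => deriv (χ n) t))
    (n : ℤ) (t : ℝ) :
    (ψ (n + 1) t + ψ (n - 1) t) •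
        (I • deriv (Sb n) t + v n t • (Sb (n + 1) t + Sb (n - 1) t) - c t • Sb n t) = 0 ∧
      (ψ (n + 1) t + ψ (n - 1) t) •
        (I • deriv (S n) t - v n t • (S (n + 1) t + S (n - 1) t) + c t • S n t) = 0 ∧
      I * (deriv (v n) t - (1 / 2) * v n t *
            ((B (S (n + 1) t) (Sb n t) + B (S n t) (Sb (n + 1) t)) -
              (B (S n t) (Sb (n - 1) t) + B (S (n - 1) t) (Sb n t)))) *
            (ψ (n + 1) t + ψ (n - 1) t) +
          B (I • deriv (S n) t - v n t • (S (n + 1) t + S (n - 1) t) + c t • S n t) (φ n t) +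
          B (χ n t) (I • deriv (Sb n) t + v n t • (Sb (n + 1) t + Sb (n - 1) t) - c t • Sb n t) =
        0 := by
  have hL' := LinearizedSpectralProblem.of_hasDerivAt hL
    (fun n => (hSd n t).hasDerivAt) (fun n => (hSbd n t).hasDerivAt)
    (fun n => (hvd n t).hasDerivAt) (fun n => (hψd n t).hasDerivAt)
    (fun n => (hφd n t).hasDerivAt) (fun n => (hχd n t).hasDerivAt)
  exact ⟨hL'.smul_Sb_evolution_eq_zero (hM t) n, hL'.smul_S_evolution_eq_zero (hL t) (hM t) n,
    hL'.v_evolution_add_pairing_eq_zero (hL t) (hM t) n⟩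

theorem stmt0 {N : ℕ} (hN : 1 ≤ N)
    (S Sb : ℤ → ℝ → Fin N → ℂ) (v ψ : ℤ → ℝ → ℂ)
    (φ χ : ℤ → ℝ → Fin N → ℂ) (c lam : ℂ)
    (hSd : ∀ n, Differentiable ℝ (S n)) (hSbd : ∀ n, Differentiable ℝ (Sb n))
    (hvd : ∀ n, Differentiable ℝ (v n)) (hψd : ∀ n, Differentiable ℝ (ψ n))
    (hφd : ∀ n, Differentiable ℝ (φ n)) (hχd : ∀ n, Differentiable ℝ (χ n))
    (hL1 : ∀ (n : ℤ) (t : ℝ), v n t * (ψ (n+1) t + ψ (n-1) t)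
      = lam * ψ n t - pair (S n t) (φ n t) - pair (χ n t) (Sb n t))
    (hL2 : ∀ (n : ℤ) (t : ℝ), φ (n+1) t - φ n t
      = ((Complex.I/2) * (ψ (n+1) t + ψ (n-1) t)) • Sb n t)
    (hL3 : ∀ (n : ℤ) (t : ℝ), χ (n+1) t + χ n t
      = ((Complex.I/2) * (ψ (n+1) t + ψ (n-1) t)) • S n t)
    (hM1 : ∀ (n : ℤ) (t : ℝ), Complex.I * deriv (ψ n) t
      = v n t * (ψ (n+1) t + ψ (n-1) t) - c * ψ n t)
    (hM2 : ∀ (n : ℤ) (t : ℝ), deriv (φ n) t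
      = ((1/2) * v n t * (ψ (n+1) t + ψ (n-1) t)) • Sb (n-1) t
        - ((1/2) * v (n-1) t * (ψ n t + ψ (n-2) t)) • Sb n t)
    (hM3 : ∀ (n : ℤ) (t : ℝ), deriv (χ n) t
      = ((1/2) * v n t * (ψ (n+1) t + ψ (n-1) t)) • S (n-1) t
        + ((1/2) * v (n-1) t * (ψ n t + ψ (n-2) t)) • S n t
        + (2 * Complex.I * c) • χ n t) :
    ∀ (n : ℤ) (t : ℝ),
      ((ψ (n+1) t + ψ (n-1) t) •
        (Complex.I • deriv (Sb n) t + (v n t) • (Sb (n+1) t + Sb (n-1) t) - c • Sb n t) = 0)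
      ∧ ((ψ (n+1) t + ψ (n-1) t) •
        (Complex.I • deriv (S n) t - (v n t) • (S (n+1) t + S (n-1) t) + c • S n t) = 0)
      ∧ (Complex.I * (deriv (v n) t - (1/2) * v n t *
          ((pair (S (n+1) t) (Sb n t) + pair (S n t) (Sb (n+1) t))
            - (pair (S n t) (Sb (n-1) t) + pair (S (n-1) t) (Sb n t))))
          * (ψ (n+1) t + ψ (n-1) t)
        + pair (Complex.I • deriv (S n) t - (v n t) • (S (n+1) t + S (n-1) t) + c • S n t)
            (φ n t)
        + pair (χ n t)
            (Complex.I • deriv (Sb n) t + (v n t) • (Sb (n+1) t + Sb (n-1) t) - c • Sb n t)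
        = 0) := by
  simp only [← YajimaOikawa.pairing_apply] at hL1 ⊢
  exact stmt0_general (YajimaOikawa.pairing N) S Sb v ψ φ χ (fun _ => c) lam
    hSd hSbd hvd hψd hφd hχd (fun t => ⟨(hL1 · t), (hL2 · t), (hL3 · t)⟩)
    (fun t => ⟨(hM1 · t), (hM2 · t), (hM3 · t)⟩)
end

section
/- Suppose the sequences S_n(t), S̄_n(t) ∈ ℂ^N, v_n(t) ∈ ℂ, ψ_n(t) ∈ ℂ, φ_n(t), χ_n(t) ∈ ℂ^N (n ∈ ℤ, t ∈ ℝ, all differentiable in t) satisfy, for all n and t, the spectral problem (YO-L) and the time evolution (YO-M), and suppose moreover that ψ_{n+1}(t) + ψ_{n−1}(t) ≠ 0 for all n and t. Then (S, S̄, v) satisfies the discrete multicomponent Yajima–Oikawa system (dgvYO): i S_{n,t} = v_n (S_{n+1} + S_{n−1}) − c S_n, i S̄_{n,t} = −v_n (S̄_{n+1} + S̄_{n−1}) + c S̄_n, and v_{n,t} = (1/2) v_n Δ⁺(⟨S_n, S̄_{n−1}⟩ + ⟨S_{n−1}, S̄_n⟩) for all n and t. -/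
open Complex BigOperators

/-!
Write `Pₙ = ψₙ₊₁ + ψₙ₋₁` and `wₙ = vₙ Pₙ`. Differentiating each equation of the spectral problem in
`t` and inserting the time evolution expresses the derivatives of `Pₙ Sₙ`, `Pₙ S̄ₙ` and `wₙ` through
undifferentiated quantities, and the quotient rule then gives those of `Sₙ`, `S̄ₙ` and `vₙ`. In the
last one the eigenfunctions cancel because the spectral problem at the sites `n ± 1` expresses
`wₙ₊₁ + wₙ₋₁` through `Pₙ`, `φₙ` and `χₙ`.
-/

theorem hasDerivAt_of_smul {𝕜 𝕜' E : Type*} [NontriviallyNormedField 𝕜]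
    [NontriviallyNormedField 𝕜'] [NormedAlgebra 𝕜 𝕜'] [NormedAddCommGroup E] [NormedSpace 𝕜 E]
    [NormedSpace 𝕜' E] [IsScalarTower 𝕜 𝕜' E] {p : 𝕜 → 𝕜'} {p' : 𝕜'} {f : 𝕜 → E} {f' : E} {t : 𝕜}
    (hp : HasDerivAt p p' t) (hne : p t ≠ 0)
    (hpf : HasDerivAt (fun s => p s • f s) (p t • f' + p' • f t) t) : HasDerivAt f f' t := by
  have hquot : HasDerivAt (fun s => (p s)⁻¹ • p s • f s) f' t := by
    convert! (hp.inv hne).smul hpf using 1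
    simp only [Pi.inv_apply]
    match_scalars <;> field_simp
    ring
  refine hquot.congr_of_eventuallyEq ?_
  filter_upwards [hp.continuousAt.eventually_ne hne] with s hs
  exact (inv_smul_smul₀ hs (f s)).symm

/-- The sum `ψₙ₊₁ + ψₙ₋₁` of the values of a lattice function at the two neighbours of the site `n`,
the combination through which `ψ` enters the Lax pair. -/
def neighborSum (ψ : ℤ → ℝ → ℂ) (n : ℤ) (t : ℝ) : ℂ := ψ (n + 1) t + ψ (n - 1) t

theorem neighborSum_sub_one (ψ : ℤ → ℝ → ℂ) (n : ℤ) (t : ℝ) :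
    neighborSum ψ (n - 1) t = ψ n t + ψ (n - 2) t := by
  rw [neighborSum, sub_add_cancel, sub_sub, one_add_one_eq_two]

section YajimaOikawa

variable {E F : Type*} [NormedAddCommGroup E] [NormedSpace ℂ E] [NormedAddCommGroup F]
  [NormedSpace ℂ F] {B : E →L[ℂ] F →L[ℂ] ℂ} {c lam : ℂ} {S χ : ℤ → ℝ → E} {Sb φ : ℤ → ℝ → F}
  {v ψ : ℤ → ℝ → ℂ} {n : ℤ} {t : ℝ}

/-- The spectral problem (YO-L) with spectral parameter `lam`. The space `ℂ^N` of the fields is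
replaced by two normed spaces `E` (for `S`, `χ`) and `F` (for `S̄`, `φ`) paired by a continuous
bilinear form `B`. -/
structure YOSpectralProblem (B : E →L[ℂ] F →L[ℂ] ℂ) (lam : ℂ) (S : ℤ → ℝ → E) (Sb : ℤ → ℝ → F)
    (v ψ : ℤ → ℝ → ℂ) (φ : ℤ → ℝ → F) (χ : ℤ → ℝ → E) : Prop where
  mul_neighborSum (n : ℤ) (t : ℝ) :
    v n t * neighborSum ψ n t = lam * ψ n t - B (S n t) (φ n t) - B (χ n t) (Sb n t)
  phi_add_one_sub_phi (n : ℤ) (t : ℝ) : φ (n + 1) t - φ n t = (I / 2 * neighborSum ψ n t) • Sb n t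
  chi_add_one_add_chi (n : ℤ) (t : ℝ) : χ (n + 1) t + χ n t = (I / 2 * neighborSum ψ n t) • S n t

/-- The time evolution (YO-M) of differentiable eigenfunctions `ψ`, `φ`, `χ`, for fields with values
in normed spaces as in `YOSpectralProblem`. -/
structure YOTimeEvolution (c : ℂ) (S : ℤ → ℝ → E) (Sb : ℤ → ℝ → F) (v ψ : ℤ → ℝ → ℂ)
    (φ : ℤ → ℝ → F) (χ : ℤ → ℝ → E) : Prop where
  differentiable_psi (n : ℤ) : Differentiable ℝ (ψ n)
  differentiable_phi (n : ℤ) : Differentiable ℝ (φ n)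
  differentiable_chi (n : ℤ) : Differentiable ℝ (χ n)
  deriv_psi (n : ℤ) (t : ℝ) : I * deriv (ψ n) t = v n t * neighborSum ψ n t - c * ψ n t
  deriv_phi (n : ℤ) (t : ℝ) :
    deriv (φ n) t = (1 / 2 * v n t * neighborSum ψ n t) • Sb (n - 1) t
      - (1 / 2 * v (n - 1) t * neighborSum ψ (n - 1) t) • Sb n t
  deriv_chi (n : ℤ) (t : ℝ) :
    deriv (χ n) t = (1 / 2 * v n t * neighborSum ψ n t) • S (n - 1) t
      + (1 / 2 * v (n - 1) t * neighborSum ψ (n - 1) t) • S n t + (2 * I * c) • χ n t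

namespace YOSpectralProblem

theorem mul_neighborSum_add_one (hL : YOSpectralProblem B lam S Sb v ψ φ χ) (n : ℤ) (t : ℝ) :
    v (n + 1) t * neighborSum ψ (n + 1) t =
      lam * ψ (n + 1) t - B (S (n + 1) t) (φ n t) + B (χ n t) (Sb (n + 1) t)
        - I / 2 * neighborSum ψ n t * (B (S (n + 1) t) (Sb n t) + B (S n t) (Sb (n + 1) t)) := by
  have hφ : φ (n + 1) t = φ n t + (I / 2 * neighborSum ψ n t) • Sb n t :=
    sub_eq_iff_eq_add'.mp (hL.phi_add_one_sub_phi n t)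
  have hχ : χ (n + 1) t = (I / 2 * neighborSum ψ n t) • S n t - χ n t :=
    eq_sub_of_add_eq (hL.chi_add_one_add_chi n t)
  rw [hL.mul_neighborSum, hφ, hχ]
  simp only [map_add, map_sub, map_smul, sub_apply, smul_apply, smul_eq_mul]
  ring

theorem mul_neighborSum_sub_one (hL : YOSpectralProblem B lam S Sb v ψ φ χ) (n : ℤ) (t : ℝ) :
    v (n - 1) t * neighborSum ψ (n - 1) t =
      lam * ψ (n - 1) t - B (S (n - 1) t) (φ n t) + B (χ n t) (Sb (n - 1) t) := by
  have hφ : φ n t - φ (n - 1) t = (I / 2 * neighborSum ψ (n - 1) t) • Sb (n - 1) t := by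
    simpa only [sub_add_cancel] using hL.phi_add_one_sub_phi (n - 1) t
  have hχ : χ n t + χ (n - 1) t = (I / 2 * neighborSum ψ (n - 1) t) • S (n - 1) t := by
    simpa only [sub_add_cancel] using hL.chi_add_one_add_chi (n - 1) t
  rw [hL.mul_neighborSum, sub_eq_iff_eq_add.mp hφ, eq_sub_of_add_eq' hχ]
  simp only [map_add, map_sub, map_smul, sub_apply, smul_apply, smul_eq_mul]
  ring

theorem mul_neighborSum_add_mul_neighborSum (hL : YOSpectralProblem B lam S Sb v ψ φ χ) (n : ℤ)
    (t : ℝ) :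
    v (n + 1) t * neighborSum ψ (n + 1) t + v (n - 1) t * neighborSum ψ (n - 1) t =
      lam * neighborSum ψ n t - B (S (n + 1) t + S (n - 1) t) (φ n t)
        + B (χ n t) (Sb (n + 1) t + Sb (n - 1) t)
        - I / 2 * neighborSum ψ n t * (B (S (n + 1) t) (Sb n t) + B (S n t) (Sb (n + 1) t)) := by
  rw [hL.mul_neighborSum_add_one, hL.mul_neighborSum_sub_one, map_add, map_add, add_apply,
    neighborSum.eq_def ψ n]
  ring

end YOSpectralProblem

namespace YOTimeEvolution

theorem hasDerivAt_psi (hM : YOTimeEvolution c S Sb v ψ φ χ) (n : ℤ) (t : ℝ) :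
    HasDerivAt (ψ n) (-I * (v n t * neighborSum ψ n t - c * ψ n t)) t := by
  convert! (hM.differentiable_psi n t).hasDerivAt using 1
  rw [← hM.deriv_psi, ← mul_assoc, neg_mul, I_mul_I, neg_neg, one_mul]

theorem hasDerivAt_neighborSum (hM : YOTimeEvolution c S Sb v ψ φ χ) (n : ℤ) (t : ℝ) :
    HasDerivAt (neighborSum ψ n) (-I * (v (n + 1) t * neighborSum ψ (n + 1) t
      + v (n - 1) t * neighborSum ψ (n - 1) t - c * neighborSum ψ n t)) t := by
  convert! (hM.hasDerivAt_psi (n + 1) t).add (hM.hasDerivAt_psi (n - 1) t) using 1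
  rw [neighborSum.eq_def ψ n]
  ring

theorem hasDerivAt_I_div_two_mul_neighborSum (hM : YOTimeEvolution c S Sb v ψ φ χ) (n : ℤ) (t : ℝ) :
    HasDerivAt (fun s => I / 2 * neighborSum ψ n s) (1 / 2 * (v (n + 1) t * neighborSum ψ (n + 1) t
      + v (n - 1) t * neighborSum ψ (n - 1) t - c * neighborSum ψ n t)) t := by
  convert! (hM.hasDerivAt_neighborSum n t).const_mul (I / 2) using 1
  rw [← mul_assoc]
  congr 1
  linear_combination (1 / 2) * I_mul_I

theorem hasDerivAt_phi_add_one_sub_phi (hM : YOTimeEvolution c S Sb v ψ φ χ) (n : ℤ) (t : ℝ) :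
    HasDerivAt (fun s => φ (n + 1) s - φ n s)
      ((1 / 2 * (v (n + 1) t * neighborSum ψ (n + 1) t
          + v (n - 1) t * neighborSum ψ (n - 1) t)) • Sb n t
        - (1 / 2 * (v n t * neighborSum ψ n t)) • (Sb (n + 1) t + Sb (n - 1) t)) t := by
  convert! (hM.differentiable_phi (n + 1) t).hasDerivAt.fun_sub
    (hM.differentiable_phi n t).hasDerivAt using 1
  rw [hM.deriv_phi, hM.deriv_phi, add_sub_cancel_right]
  module

theorem hasDerivAt_chi_add_one_add_chi (hM : YOTimeEvolution c S Sb v ψ φ χ) (n : ℤ) (t : ℝ) :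
    HasDerivAt (fun s => χ (n + 1) s + χ n s)
      ((1 / 2 * (v (n + 1) t * neighborSum ψ (n + 1) t
          + v (n - 1) t * neighborSum ψ (n - 1) t)) • S n t
        + (1 / 2 * (v n t * neighborSum ψ n t)) • (S (n + 1) t + S (n - 1) t)
        + (2 * I * c) • (χ (n + 1) t + χ n t)) t := by
  convert! (hM.differentiable_chi (n + 1) t).hasDerivAt.fun_add
    (hM.differentiable_chi n t).hasDerivAt using 1
  rw [hM.deriv_chi, hM.deriv_chi, add_sub_cancel_right]
  module

theorem hasDerivAt_S (hM : YOTimeEvolution c S Sb v ψ φ χ)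
    (hL : YOSpectralProblem B lam S Sb v ψ φ χ) (hne : neighborSum ψ n t ≠ 0) :
    HasDerivAt (S n) (-I • (v n t • (S (n + 1) t + S (n - 1) t) - c • S n t)) t := by
  refine hasDerivAt_of_smul (hM.hasDerivAt_I_div_two_mul_neighborSum n t)
    (mul_ne_zero (div_ne_zero I_ne_zero two_ne_zero) hne) ?_
  have hχ := hM.hasDerivAt_chi_add_one_add_chi n t
  simp only [hL.chi_add_one_add_chi] at hχ
  convert hχ using 1
  have hS : I / 2 * neighborSum ψ n t * -I = 1 / 2 * neighborSum ψ n t := by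
    linear_combination (-neighborSum ψ n t / 2) * I_mul_I
  have hχS : 2 * I * c * (I / 2 * neighborSum ψ n t) = -(c * neighborSum ψ n t) := by
    linear_combination (c * neighborSum ψ n t) * I_mul_I
  rw [smul_smul, hS, smul_smul (2 * I * c), hχS]
  module

theorem hasDerivAt_Sb (hM : YOTimeEvolution c S Sb v ψ φ χ)
    (hL : YOSpectralProblem B lam S Sb v ψ φ χ) (hne : neighborSum ψ n t ≠ 0) :
    HasDerivAt (Sb n) (I • (v n t • (Sb (n + 1) t + Sb (n - 1) t) - c • Sb n t)) t := by
  refine hasDerivAt_of_smul (hM.hasDerivAt_I_div_two_mul_neighborSum n t)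
    (mul_ne_zero (div_ne_zero I_ne_zero two_ne_zero) hne) ?_
  have hφ := hM.hasDerivAt_phi_add_one_sub_phi n t
  simp only [hL.phi_add_one_sub_phi] at hφ
  convert hφ using 1
  have hSb : I / 2 * neighborSum ψ n t * I = -(1 / 2 * neighborSum ψ n t) := by
    linear_combination (neighborSum ψ n t / 2) * I_mul_I
  rw [smul_smul, hSb]
  module

theorem hasDerivAt_v (hM : YOTimeEvolution c S Sb v ψ φ χ)
    (hL : YOSpectralProblem B lam S Sb v ψ φ χ) (hne : neighborSum ψ n t ≠ 0) :
    HasDerivAt (v n) (1 / 2 * v n t *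
      ((B (S (n + 1) t) (Sb n t) + B (S n t) (Sb (n + 1) t))
        - (B (S n t) (Sb (n - 1) t) + B (S (n - 1) t) (Sb n t)))) t := by
  refine hasDerivAt_of_smul (hM.hasDerivAt_neighborSum n t) hne ?_
  have hSφ := (B.bilinearRestrictScalars ℝ).hasDerivAt_of_bilinear
    (fun _ => hM.hasDerivAt_S hL hne) fun _ => (hM.differentiable_phi n t).hasDerivAt
  have hχSb := (B.bilinearRestrictScalars ℝ).hasDerivAt_of_bilinear
    (fun _ => (hM.differentiable_chi n t).hasDerivAt) fun _ => hM.hasDerivAt_Sb hL hne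
  have hψ := (((hM.hasDerivAt_psi n t).const_mul lam).fun_sub hSφ).fun_sub hχSb
  simp only [ContinuousLinearMap.bilinearRestrictScalars_apply_apply, ← hL.mul_neighborSum,
    mul_comm (v n _)] at hψ
  convert! hψ using 1
  rw [hM.deriv_phi, hM.deriv_chi]
  simp only [map_add, map_sub, map_smul, add_apply, sub_apply, smul_apply, smul_eq_mul]
  have hsum := hL.mul_neighborSum_add_mul_neighborSum n t
  simp only [map_add, add_apply] at hsum
  linear_combination -I * v n t * hsum + I * c * hL.mul_neighborSum n t
    + v n t * neighborSum ψ n t / 2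
      * (B (S (n + 1) t) (Sb n t) + B (S n t) (Sb (n + 1) t)) * I_mul_I

end YOTimeEvolution

theorem stmt1_general (hL : YOSpectralProblem B lam S Sb v ψ φ χ)
    (hM : YOTimeEvolution c S Sb v ψ φ χ) (hne : neighborSum ψ n t ≠ 0) :
    HasDerivAt (S n) (-I • (v n t • (S (n + 1) t + S (n - 1) t) - c • S n t)) t ∧
    HasDerivAt (Sb n) (I • (v n t • (Sb (n + 1) t + Sb (n - 1) t) - c • Sb n t)) t ∧
    HasDerivAt (v n) (1 / 2 * v n t *
      ((B (S (n + 1) t) (Sb n t) + B (S n t) (Sb (n + 1) t))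
        - (B (S n t) (Sb (n - 1) t) + B (S (n - 1) t) (Sb n t)))) t :=
  ⟨hM.hasDerivAt_S hL hne, hM.hasDerivAt_Sb hL hne, hM.hasDerivAt_v hL hne⟩

end YajimaOikawa

theorem stmt1 {N : ℕ} (hN : 1 ≤ N)
    (S Sb : ℤ → ℝ → Fin N → ℂ) (v ψ : ℤ → ℝ → ℂ)
    (φ χ : ℤ → ℝ → Fin N → ℂ) (c lam : ℂ)
    (hSd : ∀ n, Differentiable ℝ (S n)) (hSbd : ∀ n, Differentiable ℝ (Sb n))
    (hvd : ∀ n, Differentiable ℝ (v n)) (hψd : ∀ n, Differentiable ℝ (ψ n))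
    (hφd : ∀ n, Differentiable ℝ (φ n)) (hχd : ∀ n, Differentiable ℝ (χ n))
    (hL1 : ∀ (n : ℤ) (t : ℝ), v n t * (ψ (n+1) t + ψ (n-1) t)
      = lam * ψ n t - pair (S n t) (φ n t) - pair (χ n t) (Sb n t))
    (hL2 : ∀ (n : ℤ) (t : ℝ), φ (n+1) t - φ n t
      = ((Complex.I/2) * (ψ (n+1) t + ψ (n-1) t)) • Sb n t)
    (hL3 : ∀ (n : ℤ) (t : ℝ), χ (n+1) t + χ n t
      = ((Complex.I/2) * (ψ (n+1) t + ψ (n-1) t)) • S n t)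
    (hM1 : ∀ (n : ℤ) (t : ℝ), Complex.I * deriv (ψ n) t
      = v n t * (ψ (n+1) t + ψ (n-1) t) - c * ψ n t)
    (hM2 : ∀ (n : ℤ) (t : ℝ), deriv (φ n) t
      = ((1/2) * v n t * (ψ (n+1) t + ψ (n-1) t)) • Sb (n-1) t
        - ((1/2) * v (n-1) t * (ψ n t + ψ (n-2) t)) • Sb n t)
    (hM3 : ∀ (n : ℤ) (t : ℝ), deriv (χ n) t
      = ((1/2) * v n t * (ψ (n+1) t + ψ (n-1) t)) • S (n-1) t
        + ((1/2) * v (n-1) t * (ψ n t + ψ (n-2) t)) • S n t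
        + (2 * Complex.I * c) • χ n t)
    (hne : ∀ (n : ℤ) (t : ℝ), ψ (n+1) t + ψ (n-1) t ≠ 0) :
    ∀ (n : ℤ) (t : ℝ),
      (Complex.I • deriv (S n) t = (v n t) • (S (n+1) t + S (n-1) t) - c • S n t)
      ∧ (Complex.I • deriv (Sb n) t = -((v n t) • (Sb (n+1) t + Sb (n-1) t)) + c • Sb n t)
      ∧ (deriv (v n) t = (1/2) * v n t *
          ((pair (S (n+1) t) (Sb n t) + pair (S n t) (Sb (n+1) t))
            - (pair (S n t) (Sb (n-1) t) + pair (S (n-1) t) (Sb n t)))) := by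
  intro n t
  have hL : YOSpectralProblem (dotProductBilin ℂ ℂ).toContinuousBilinearMap lam S Sb v ψ φ χ :=
    ⟨hL1, hL2, hL3⟩
  have hM : YOTimeEvolution c S Sb v ψ φ χ :=
    ⟨hψd, hφd, hχd, hM1, by simpa only [neighborSum_sub_one], by simpa only [neighborSum_sub_one]⟩
  obtain ⟨hS, hSb, hv⟩ := stmt1_general hL hM (hne n t)
  refine ⟨?_, ?_, hv.deriv⟩
  · rw [hS.deriv, smul_smul, mul_neg, I_mul_I, neg_neg, one_smul]
  · rw [hSb.deriv, smul_smul, I_mul_I, neg_one_smul, neg_sub, sub_eq_neg_add]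
end

section
/- Let v_n(τ) ∈ ℂ (n ∈ ℤ, τ ∈ ℝ) be differentiable in τ and satisfy the modified Volterra lattice v_{n,τ} = 2 v_n² (v_{n+1} − v_{n−1}) for all n and τ. Define u_n(τ) := 2 v_n(τ) v_{n+1}(τ). Then u satisfies the Volterra lattice u_{n,τ} = u_n (u_{n+1} − u_{n−1}) for all n and τ. -/
/-!
With `u n = a * v n * v (n + 1)`, the modified Volterra lattice is equivalent to
`v n' = v n * (u n - u (n - 1))`: formally, the logarithmic derivative of `v n` is
`u n - u (n - 1)`. Logarithmic derivatives add under products, so that of `u n` is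
`(u n - u (n - 1)) + (u (n + 1) - u n)`, which telescopes to `u (n + 1) - u (n - 1)`.
-/

section Lattice

variable {ι R : Type*} [AddGroupWithOne ι] [CommRing R]

/-- The right-hand side of the Volterra lattice, as a vector field on sequences. The index type is
arbitrary so as to include the periodic lattices `ι = ZMod N`. -/
def volterraField (u : ι → R) (n : ι) : R :=
  u n * (u (n + 1) - u (n - 1))

/-- The right-hand side of the modified Volterra lattice with coupling constant `a`, as a vector
field on sequences. -/
def modifiedVolterraField (a : R) (v : ι → R) (n : ι) : R :=
  a * v n ^ 2 * (v (n + 1) - v (n - 1))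

/-- The discrete Miura transformation, which maps solutions of the modified Volterra lattice with
coupling constant `a` to solutions of the Volterra lattice. -/
def volterraMiura (a : R) (v : ι → R) (n : ι) : R :=
  a * v n * v (n + 1)

theorem modifiedVolterraField_eq_mul_sub (a : R) (v : ι → R) (n : ι) :
    modifiedVolterraField a v n = v n * (volterraMiura a v n - volterraMiura a v (n - 1)) := by
  simp only [modifiedVolterraField, volterraMiura, sub_add_cancel]
  ring

end Lattice

section Flow

variable {𝕜 A : Type*} [NontriviallyNormedField 𝕜] [NormedCommRing A] [NormedAlgebra 𝕜 A]

theorem hasDerivAt_mul_of_deriv_eq_mul {f g : 𝕜 → A} {p q : A} {τ : 𝕜}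
    (hf : HasDerivAt f (f τ * p) τ) (hg : HasDerivAt g (g τ * q) τ) :
    HasDerivAt (fun t ↦ f t * g t) (f τ * g τ * (p + q)) τ :=
  (hf.fun_mul hg).congr_deriv (by ring)

theorem stmt3_general {ι : Type*} [AddGroupWithOne ι] {a : A} {v : ι → 𝕜 → A} {τ : 𝕜}
    (hv : ∀ n, HasDerivAt (v n) (modifiedVolterraField a (v · τ) n) τ) (n : ι) :
    HasDerivAt (fun t ↦ volterraMiura a (v · t) n)
      (volterraField (volterraMiura a (v · τ)) n) τ := by
  set u := volterraMiura a (v · τ)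
  have hv_log (m : ι) : HasDerivAt (v m) (v m τ * (u m - u (m - 1))) τ :=
    (hv m).congr_deriv (modifiedVolterraField_eq_mul_sub a (v · τ) m)
  have hv_succ : HasDerivAt (v (n + 1)) (v (n + 1) τ * (u (n + 1) - u n)) τ := by
    simpa only [add_sub_cancel_right] using hv_log (n + 1)
  have hav : HasDerivAt (fun t ↦ a * v n t) (a * v n τ * (u n - u (n - 1))) τ :=
    ((hv_log n).const_mul a).congr_deriv (mul_assoc ..).symm
  have telescope : u n - u (n - 1) + (u (n + 1) - u n) = u (n + 1) - u (n - 1) := by ring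
  exact (hasDerivAt_mul_of_deriv_eq_mul hav hv_succ).congr_deriv
    (congrArg (u n * ·) telescope)

end Flow

theorem stmt3 (v : ℤ → ℝ → ℂ)
    (hvd : ∀ n, Differentiable ℝ (v n))
    (hmV : ∀ (n : ℤ) (τ : ℝ), deriv (v n) τ = 2 * (v n τ)^2 * (v (n+1) τ - v (n-1) τ))
    (u : ℤ → ℝ → ℂ)
    (hu : ∀ (n : ℤ) (τ : ℝ), u n τ = 2 * v n τ * v (n+1) τ) :
    ∀ (n : ℤ) (τ : ℝ), deriv (u n) τ = u n τ * (u (n+1) τ - u (n-1) τ) := by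
  obtain rfl : u = fun n t ↦ volterraMiura 2 (v · t) n := funext₂ hu
  exact fun n τ ↦ (stmt3_general (fun m ↦ (hvd m τ).hasDerivAt.congr_deriv (hmV m τ)) n).deriv
end

section
/- Let S, S̄ : ℝ² → ℂ^N, L : ℝ² → ℂ, ψ : ℝ² → ℂ and φ : ℝ² → ℂ^N be functions of (x,t) of class C³, and let ζ ∈ ℂ. Suppose that for all (x,t): (spatial system) ψ_{xx} + L ψ + ⟨S, φ⟩ = ζ ψ and φ_x = i S̄ ψ; and (time system) i ψ_t = ψ_{xx} + L ψ and φ_t = S̄ ψ_x − S̄_x ψ. Then for all (x,t): (a) (i S̄_t + S̄_{xx} + L S̄) ψ = 0 (an identity in ℂ^N), and (b) (L_t − 2 ∂_x⟨S, S̄⟩) ψ + ⟨S_t + i(S_{xx} + L S), φ⟩ = 0. -/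
open Complex BigOperators

/-- Partial derivative in the first (space) variable. -/
noncomputable def pdx {E : Type*} [NormedAddCommGroup E] [NormedSpace ℝ E]
    (f : ℝ → ℝ → E) : ℝ → ℝ → E := fun x t => deriv (fun y => f y t) x

/-- Partial derivative in the second (time) variable. -/
noncomputable def pdt {E : Type*} [NormedAddCommGroup E] [NormedSpace ℝ E]
    (f : ℝ → ℝ → E) : ℝ → ℝ → E := fun x t => deriv (fun s => f x s) t

/-!
Put `H f = ∂ₓ² f + L f` and `P = ⟨S, φ⟩`.

(a) is the compatibility condition `φ_{xt} = φ_{tx}`, computed from the two first-order equations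
for `φ`.

For (b), the two equations for `ψ` give `P = ζ ψ - i ψ_t`, while `(i ∂_t - H) ψ = 0`. Since
`[i ∂_t - H, ∂_t] = L_t`, applying `i ∂_t - H` to this expression for `P` leaves only `-i L_t ψ`.
On the other hand, the Leibniz rule and the equations for `φ` give
`(i ∂_t - H) P = ⟨(i ∂_t - H) S, φ⟩ - 2 i ψ ∂ₓ⟨S, S̄⟩`. Comparing the two values gives (b).
-/

open Function

section PartialDerivatives

variable {E : Type*} [NormedAddCommGroup E] [NormedSpace ℝ E] {f g : ℝ → ℝ → E} {x t : ℝ}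

theorem hasDerivAt_pdx (hf : DifferentiableAt ℝ (uncurry f) (x, t)) :
    HasDerivAt (fun y => f y t) (pdx f x t) x :=
  (hf.comp (f := fun y : ℝ => (y, t)) x (by fun_prop)).hasDerivAt

theorem hasDerivAt_pdt (hf : DifferentiableAt ℝ (uncurry f) (x, t)) :
    HasDerivAt (fun s => f x s) (pdt f x t) t :=
  (hf.comp (f := fun s : ℝ => (x, s)) t (by fun_prop)).hasDerivAt

theorem pdx_eq_fderiv (hf : DifferentiableAt ℝ (uncurry f) (x, t)) :
    pdx f x t = fderiv ℝ (uncurry f) (x, t) (1, 0) :=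
  (hf.hasFDerivAt.comp_hasDerivAt (f := fun y => (y, t)) x
    ((hasDerivAt_id x).prodMk (hasDerivAt_const x t))).deriv

theorem pdt_eq_fderiv (hf : DifferentiableAt ℝ (uncurry f) (x, t)) :
    pdt f x t = fderiv ℝ (uncurry f) (x, t) (0, 1) :=
  (hf.hasFDerivAt.comp_hasDerivAt (f := fun s => (x, s)) t
    ((hasDerivAt_const t x).prodMk (hasDerivAt_id t))).deriv

theorem uncurry_pdx (hf : Differentiable ℝ (uncurry f)) :
    uncurry (pdx f) = fun p => fderiv ℝ (uncurry f) p (1, 0) :=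
  funext fun p => pdx_eq_fderiv (hf p)

theorem uncurry_pdt (hf : Differentiable ℝ (uncurry f)) :
    uncurry (pdt f) = fun p => fderiv ℝ (uncurry f) p (0, 1) :=
  funext fun p => pdt_eq_fderiv (hf p)

theorem contDiff_pdx {m n : WithTop ℕ∞} (hf : ContDiff ℝ n (uncurry f)) (hmn : m + 1 ≤ n) :
    ContDiff ℝ m (uncurry (pdx f)) := by
  rw [uncurry_pdx ((hf.of_le (le_add_self.trans hmn)).differentiable one_ne_zero)]
  exact (hf.fderiv_right hmn).clm_apply contDiff_const

theorem contDiff_pdt {m n : WithTop ℕ∞} (hf : ContDiff ℝ n (uncurry f)) (hmn : m + 1 ≤ n) :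
    ContDiff ℝ m (uncurry (pdt f)) := by
  rw [uncurry_pdt ((hf.of_le (le_add_self.trans hmn)).differentiable one_ne_zero)]
  exact (hf.fderiv_right hmn).clm_apply contDiff_const

theorem differentiable_pdx (hf : ContDiff ℝ 2 (uncurry f)) :
    Differentiable ℝ (uncurry (pdx f)) :=
  (contDiff_pdx hf one_add_one_eq_two.le).differentiable one_ne_zero

theorem differentiable_pdt (hf : ContDiff ℝ 2 (uncurry f)) :
    Differentiable ℝ (uncurry (pdt f)) :=
  (contDiff_pdt hf one_add_one_eq_two.le).differentiable one_ne_zero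

theorem pdt_pdx_comm (hf : ContDiff ℝ 2 (uncurry f)) : pdt (pdx f) = pdx (pdt f) := by
  have hdf : Differentiable ℝ (uncurry f) := hf.differentiable two_ne_zero
  have hd2f : Differentiable ℝ (fderiv ℝ (uncurry f)) :=
    (hf.fderiv_right one_add_one_eq_two.le).differentiable one_ne_zero
  ext x t
  have hsymm : IsSymmSndFDerivAt ℝ (uncurry f) (x, t) :=
    hf.contDiffAt.isSymmSndFDerivAt (by simp)
  rw [pdt_eq_fderiv (differentiable_pdx hf _), pdx_eq_fderiv (differentiable_pdt hf _),
    uncurry_pdx hdf, uncurry_pdt hdf,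
    fderiv_clm_apply (hd2f _) (by fun_prop), fderiv_clm_apply (hd2f _) (by fun_prop)]
  simpa using hsymm.eq (0, 1) (1, 0)

theorem pdx_sub (hf : Differentiable ℝ (uncurry f)) (hg : Differentiable ℝ (uncurry g)) :
    pdx (f - g) = pdx f - pdx g := by
  ext x t
  exact ((hasDerivAt_pdx (hf _)).sub (hasDerivAt_pdx (hg _))).deriv

theorem pdt_sub (hf : Differentiable ℝ (uncurry f)) (hg : Differentiable ℝ (uncurry g)) :
    pdt (f - g) = pdt f - pdt g := by
  ext x t
  exact ((hasDerivAt_pdt (hf _)).sub (hasDerivAt_pdt (hg _))).deriv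

end PartialDerivatives

section ComplexValued

variable {E F G : Type*} [NormedAddCommGroup E] [NormedSpace ℂ E]
  [NormedAddCommGroup F] [NormedSpace ℂ F] [NormedAddCommGroup G] [NormedSpace ℂ G]

theorem pdx_const_smul (c : ℂ) (f : ℝ → ℝ → E) : pdx (c • f) = c • pdx f := by
  ext x t
  exact deriv_fun_const_smul_field c fun y => f y t

theorem pdt_const_smul (c : ℂ) (f : ℝ → ℝ → E) : pdt (c • f) = c • pdt f := by
  ext x t
  exact deriv_fun_const_smul_field c (f x)

theorem hasDerivAt_clm_apply₂ (B : F →L[ℂ] E →L[ℂ] G) {f : ℝ → F} {g : ℝ → E} {f' : F} {g' : E}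
    {x : ℝ} (hf : HasDerivAt f f' x) (hg : HasDerivAt g g' x) :
    HasDerivAt (fun y => B (f y) (g y)) (B f' (g x) + B (f x) g') x := by
  rw [add_comm]
  exact (B.bilinearRestrictScalars ℝ).hasDerivAt_of_bilinear (fun _ => hf) fun _ => hg

theorem pdx_clm_apply₂ (B : F →L[ℂ] E →L[ℂ] G) {f : ℝ → ℝ → F} {g : ℝ → ℝ → E} {x t : ℝ}
    (hf : DifferentiableAt ℝ (uncurry f) (x, t)) (hg : DifferentiableAt ℝ (uncurry g) (x, t)) :
    pdx (fun y s => B (f y s) (g y s)) x t = B (pdx f x t) (g x t) + B (f x t) (pdx g x t) :=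
  (hasDerivAt_clm_apply₂ B (hasDerivAt_pdx hf) (hasDerivAt_pdx hg)).deriv

theorem pdt_clm_apply₂ (B : F →L[ℂ] E →L[ℂ] G) {f : ℝ → ℝ → F} {g : ℝ → ℝ → E} {x t : ℝ}
    (hf : DifferentiableAt ℝ (uncurry f) (x, t)) (hg : DifferentiableAt ℝ (uncurry g) (x, t)) :
    pdt (fun y s => B (f y s) (g y s)) x t = B (pdt f x t) (g x t) + B (f x t) (pdt g x t) :=
  (hasDerivAt_clm_apply₂ B (hasDerivAt_pdt hf) (hasDerivAt_pdt hg)).deriv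

theorem pdx_wronskian {ψ : ℝ → ℝ → ℂ} {f : ℝ → ℝ → E} (hψ : ContDiff ℝ 2 (uncurry ψ))
    (hf : ContDiff ℝ 2 (uncurry f)) (x t : ℝ) :
    pdx (fun y s => pdx ψ y s • f y s - ψ y s • pdx f y s) x t =
      pdx (pdx ψ) x t • f x t - ψ x t • pdx (pdx f) x t := by
  have hψ_x := hasDerivAt_pdx (hψ.differentiable two_ne_zero (x, t))
  have hf_x := hasDerivAt_pdx (hf.differentiable two_ne_zero (x, t))
  have hψ_xx := hasDerivAt_pdx (differentiable_pdx hψ (x, t))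
  have hf_xx := hasDerivAt_pdx (differentiable_pdx hf (x, t))
  refine ((hψ_xx.smul hf_x).sub (hψ_x.smul hf_xx)).deriv.trans ?_
  module

/-- The Schrödinger operator `f ↦ i f_t - (f_{xx} + L f)` with potential `L`, acting on functions
of `(x, t)` with values in a complex vector space. The time equation for `ψ` reads
`schrodingerOp L ψ = 0`. -/
noncomputable def schrodingerOp (L : ℝ → ℝ → ℂ) (f : ℝ → ℝ → E) : ℝ → ℝ → E :=
  fun x t => I • pdt f x t - (pdx (pdx f) x t + L x t • f x t)

section SchrodingerOp

variable {L : ℝ → ℝ → ℂ} {f g : ℝ → ℝ → E}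

theorem schrodingerOp_sub (hf : ContDiff ℝ 2 (uncurry f)) (hg : ContDiff ℝ 2 (uncurry g)) :
    schrodingerOp L (f - g) = schrodingerOp L f - schrodingerOp L g := by
  have hdf := hf.differentiable two_ne_zero
  have hdg := hg.differentiable two_ne_zero
  ext x t
  simp only [schrodingerOp, pdt_sub hdf hdg, pdx_sub hdf hdg,
    pdx_sub (differentiable_pdx hf) (differentiable_pdx hg), Pi.sub_apply]
  module

theorem schrodingerOp_const_smul (c : ℂ) :
    schrodingerOp L (c • f) = c • schrodingerOp L f := by
  ext x t
  simp only [schrodingerOp, pdt_const_smul, pdx_const_smul, Pi.smul_apply]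
  module

theorem schrodingerOp_pdt (hL : Differentiable ℝ (uncurry L)) (hf : ContDiff ℝ 3 (uncurry f))
    (x t : ℝ) :
    schrodingerOp L (pdt f) x t = pdt (schrodingerOp L f) x t + pdt L x t • f x t := by
  have hf2 : ContDiff ℝ 2 (uncurry f) := hf.of_le (by norm_num)
  have hf_x : ContDiff ℝ 2 (uncurry (pdx f)) := contDiff_pdx hf two_add_one_eq_three.le
  have hcomm : pdx (pdx (pdt f)) = pdt (pdx (pdx f)) := by
    rw [pdt_pdx_comm hf_x, pdt_pdx_comm hf2]
  have hf_tt := hasDerivAt_pdt (differentiable_pdt hf2 (x, t))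
  have hf_xxt := hasDerivAt_pdt (differentiable_pdx hf_x (x, t))
  have hf_t := hasDerivAt_pdt (hf2.differentiable two_ne_zero (x, t))
  have hLf_t := (hasDerivAt_pdt (hL (x, t))).smul hf_t
  have hop_t : pdt (schrodingerOp L f) x t = I • pdt (pdt f) x t -
      (pdt (pdx (pdx f)) x t + (L x t • pdt f x t + pdt L x t • f x t)) :=
    ((hf_tt.const_smul I).sub (hf_xxt.add hLf_t)).deriv
  rw [hop_t, schrodingerOp, hcomm]
  module

theorem schrodingerOp_const_smul_sub_const_smul_pdt (hL : Differentiable ℝ (uncurry L))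
    (hf : ContDiff ℝ 3 (uncurry f)) (hLf : schrodingerOp L f = 0) (c d : ℂ) (x t : ℝ) :
    schrodingerOp L (c • f - d • pdt f) x t = -d • pdt L x t • f x t := by
  have hf_t : schrodingerOp L (pdt f) x t = pdt L x t • f x t := by
    rw [schrodingerOp_pdt hL hf, hLf]
    simp [pdt]
  have hcf : ContDiff ℝ 2 (uncurry (c • f)) := (hf.of_le (by norm_num)).const_smul c
  have hdf_t : ContDiff ℝ 2 (uncurry (d • pdt f)) :=
    (contDiff_pdt hf two_add_one_eq_three.le).const_smul d
  rw [schrodingerOp_sub hcf hdf_t, schrodingerOp_const_smul, schrodingerOp_const_smul, hLf]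
  simp [hf_t]

end SchrodingerOp

variable {S : ℝ → ℝ → F} {Sb φ : ℝ → ℝ → E} {L ψ : ℝ → ℝ → ℂ}

theorem schrodingerOp_clm_apply₂ (B : F →L[ℂ] E →L[ℂ] G) (hS : ContDiff ℝ 2 (uncurry S))
    (hSb : Differentiable ℝ (uncurry Sb)) (hψ : Differentiable ℝ (uncurry ψ))
    (hφ : Differentiable ℝ (uncurry φ))
    (hφx : ∀ x t, pdx φ x t = (I * ψ x t) • Sb x t)
    (hφt : ∀ x t, pdt φ x t = pdx ψ x t • Sb x t - ψ x t • pdx Sb x t) (x t : ℝ) :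
    schrodingerOp L (fun y s => B (S y s) (φ y s)) x t =
      B (schrodingerOp L S x t) (φ x t) -
        (2 * I * ψ x t) • pdx (fun y s => B (S y s) (Sb y s)) x t := by
  have hdS : Differentiable ℝ (uncurry S) := hS.differentiable two_ne_zero
  have hP_x : pdx (fun y s => B (S y s) (φ y s)) =
      fun x t => B (pdx S x t) (φ x t) + (I * ψ x t) • B (S x t) (Sb x t) := by
    ext x t
    rw [pdx_clm_apply₂ B (hdS _) (hφ _), hφx, map_smul]
  have hP_xx : pdx (pdx fun y s => B (S y s) (φ y s)) x t =
      (B (pdx (pdx S) x t) (φ x t) + (I * ψ x t) • B (pdx S x t) (Sb x t)) +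
        ((I * ψ x t) • (B (pdx S x t) (Sb x t) + B (S x t) (pdx Sb x t)) +
          (I * pdx ψ x t) • B (S x t) (Sb x t)) := by
    have hS_xφ := hasDerivAt_clm_apply₂ B (hasDerivAt_pdx (differentiable_pdx hS (x, t)))
      (hasDerivAt_pdx (hφ (x, t)))
    have hSSb := hasDerivAt_clm_apply₂ B (hasDerivAt_pdx (hdS (x, t))) (hasDerivAt_pdx (hSb (x, t)))
    rw [hφx, map_smul] at hS_xφ
    rw [hP_x]
    exact (hS_xφ.add (((hasDerivAt_pdx (hψ _)).const_mul I).smul hSSb)).deriv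
  have hP_t : pdt (fun y s => B (S y s) (φ y s)) x t = B (pdt S x t) (φ x t) +
      (pdx ψ x t • B (S x t) (Sb x t) - ψ x t • B (S x t) (pdx Sb x t)) := by
    rw [pdt_clm_apply₂ B (hdS _) (hφ _), hφt, map_sub, map_smul, map_smul]
  simp only [schrodingerOp, hP_xx, hP_t, pdx_clm_apply₂ B (hdS (x, t)) (hSb (x, t)), map_sub,
    map_add, map_smul, sub_apply, add_apply, smul_apply]
  module

theorem smul_I_smul_pdt_add_pdx_pdx_add_smul_eq_zero (hSb : ContDiff ℝ 2 (uncurry Sb))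
    (hψ : ContDiff ℝ 2 (uncurry ψ)) (hφ : ContDiff ℝ 2 (uncurry φ))
    (hφx : ∀ x t, pdx φ x t = (I * ψ x t) • Sb x t)
    (hψt : ∀ x t, I * pdt ψ x t = pdx (pdx ψ) x t + L x t * ψ x t)
    (hφt : ∀ x t, pdt φ x t = pdx ψ x t • Sb x t - ψ x t • pdx Sb x t) (x t : ℝ) :
    ψ x t • (I • pdt Sb x t + pdx (pdx Sb) x t + L x t • Sb x t) = 0 := by
  have hφ_xt : pdt (pdx φ) x t = (I * ψ x t) • pdt Sb x t + (I * pdt ψ x t) • Sb x t := by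
    rw [funext₂ hφx]
    exact (((hasDerivAt_pdt (hψ.differentiable two_ne_zero _)).const_mul I).smul
      (hasDerivAt_pdt (hSb.differentiable two_ne_zero _))).deriv
  have hφ_tx : pdx (pdt φ) x t = pdx (pdx ψ) x t • Sb x t - ψ x t • pdx (pdx Sb) x t := by
    rw [funext₂ hφt, pdx_wronskian hψ hSb]
  have hcompat : (I * ψ x t) • pdt Sb x t + (pdx (pdx ψ) x t + L x t * ψ x t) • Sb x t =
      pdx (pdx ψ) x t • Sb x t - ψ x t • pdx (pdx Sb) x t := by
    rw [← hψt, ← hφ_xt, ← hφ_tx, pdt_pdx_comm hφ]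
  linear_combination (norm := module) hcompat

theorem stmt6_general (B : F →L[ℂ] E →L[ℂ] ℂ) {ζ : ℂ}
    (hS : ContDiff ℝ 2 (uncurry S)) (hSb : ContDiff ℝ 2 (uncurry Sb))
    (hL : Differentiable ℝ (uncurry L)) (hψ : ContDiff ℝ 3 (uncurry ψ))
    (hφ : ContDiff ℝ 2 (uncurry φ))
    (hspec : ∀ x t, pdx (pdx ψ) x t + L x t * ψ x t + B (S x t) (φ x t) = ζ * ψ x t)
    (hφx : ∀ x t, pdx φ x t = (I * ψ x t) • Sb x t)
    (hψt : ∀ x t, I * pdt ψ x t = pdx (pdx ψ) x t + L x t * ψ x t)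
    (hφt : ∀ x t, pdt φ x t = pdx ψ x t • Sb x t - ψ x t • pdx Sb x t) (x t : ℝ) :
    ψ x t • (I • pdt Sb x t + pdx (pdx Sb) x t + L x t • Sb x t) = 0 ∧
      (pdt L x t - 2 * pdx (fun y s => B (S y s) (Sb y s)) x t) * ψ x t +
        B (pdt S x t + I • (pdx (pdx S) x t + L x t • S x t)) (φ x t) = 0 := by
  have hψ2 : ContDiff ℝ 2 (uncurry ψ) := hψ.of_le (by norm_num)
  refine ⟨smul_I_smul_pdt_add_pdx_pdx_add_smul_eq_zero hSb hψ2 hφ hφx hψt hφt x t, ?_⟩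
  have hLψ : schrodingerOp L ψ = 0 := funext₂ fun x t => sub_eq_zero.mpr (hψt x t)
  have hP : (fun x t => B (S x t) (φ x t)) = ζ • ψ - I • pdt ψ := by
    ext x t
    simp only [Pi.sub_apply, Pi.smul_apply, smul_eq_mul]
    linear_combination hspec x t + hψt x t
  have hleibniz := schrodingerOp_clm_apply₂ (L := L) B hS (hSb.differentiable two_ne_zero)
    (hψ2.differentiable two_ne_zero) (hφ.differentiable two_ne_zero) hφx hφt x t
  rw [hP, schrodingerOp_const_smul_sub_const_smul_pdt hL hψ hLψ] at hleibniz
  have hS_op : pdt S x t + I • (pdx (pdx S) x t + L x t • S x t) =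
      -I • schrodingerOp L S x t := by
    rw [schrodingerOp, smul_sub, smul_smul, neg_mul, I_mul_I]
    module
  rw [hS_op, map_smul, smul_apply]
  simp only [smul_eq_mul] at hleibniz ⊢
  linear_combination I * hleibniz +
    (pdt L x t - 2 * pdx (fun y s => B (S y s) (Sb y s)) x t) * ψ x t * I_mul_I

end ComplexValued

/-- The pairing `pair` on `ℂ^N` as a continuous bilinear map, to which `stmt6_general` applies. -/
noncomputable def pairCLM (N : ℕ) : (Fin N → ℂ) →L[ℂ] (Fin N → ℂ) →L[ℂ] ℂ :=
  (dotProductBilin ℂ ℂ).toContinuousBilinearMap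

theorem stmt6 {N : ℕ} (hN : 1 ≤ N)
    (S Sb : ℝ → ℝ → Fin N → ℂ) (L ψ : ℝ → ℝ → ℂ) (φ : ℝ → ℝ → Fin N → ℂ) (ζ : ℂ)
    (hS3 : ContDiff ℝ 3 (Function.uncurry S)) (hSb3 : ContDiff ℝ 3 (Function.uncurry Sb))
    (hL3 : ContDiff ℝ 3 (Function.uncurry L)) (hψ3 : ContDiff ℝ 3 (Function.uncurry ψ))
    (hφ3 : ContDiff ℝ 3 (Function.uncurry φ))
    (hspec : ∀ (x t : ℝ),
      pdx (pdx ψ) x t + L x t * ψ x t + pair (S x t) (φ x t) = ζ * ψ x t)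
    (hφx : ∀ (x t : ℝ), pdx φ x t = (Complex.I * ψ x t) • Sb x t)
    (hψt : ∀ (x t : ℝ), Complex.I * pdt ψ x t = pdx (pdx ψ) x t + L x t * ψ x t)
    (hφt : ∀ (x t : ℝ), pdt φ x t = (pdx ψ x t) • Sb x t - (ψ x t) • pdx Sb x t) :
    ∀ (x t : ℝ),
      ((ψ x t) • (Complex.I • pdt Sb x t + pdx (pdx Sb) x t + (L x t) • Sb x t) = 0)
      ∧ ((pdt L x t - 2 * pdx (fun y s => pair (S y s) (Sb y s)) x t) * ψ x t
          + pair (pdt S x t + Complex.I • (pdx (pdx S) x t + (L x t) • S x t)) (φ x t)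
          = 0) := by
  exact stmt6_general (pairCLM N) (hS3.of_le (by norm_num)) (hSb3.of_le (by norm_num))
    (hL3.differentiable three_ne_zero) hψ3 (hφ3.of_le (by norm_num)) hspec hφx hψt hφt
end

section
/- Suppose S_n(t), S̄_n(t) ∈ ℂ^N and v_n(t) ∈ ℂ (n ∈ ℤ, t ∈ ℝ, differentiable in t) satisfy the discrete multicomponent Yajima–Oikawa system (dgvYO) with constant c ∈ ℂ. Then for every choice of component indices j, k ∈ {1, …, N} and all n and t, the componentwise conservation law holds: d/dt ( S_{n+1}^{(j)} S̄_n^{(k)} + S_n^{(j)} S̄_{n+1}^{(k)} ) = Δ⁺[ −i v_n ( S_{n+1}^{(j)} S̄_{n−1}^{(k)} − S_{n−1}^{(j)} S̄_{n+1}^{(k)} ) ], where S_n^{(j)} denotes the j-th component of S_n and S̄_n^{(k)} the k-th component of S̄_n. -/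
open Complex BigOperators

/-!
For a given potential `v`, the equations for `S` and `S̄` are linear and read
`φ' = a (φ₊ + φ₋) - γ φ` and `ψ' = -a (ψ₊ + ψ₋) + γ ψ` with `a = -i v`, `γ = -i c`; they hold for
each component separately. In the derivative of `φₙ₊₁ ψₙ + φₙ ψₙ₊₁` the `γ` terms cancel within each
product, the terms `aₙ₊₁ φₙ ψₙ` and `aₙ φₙ₊₁ ψₙ₊₁` cancel between the two products, and what remains
with coefficient `aₙ₊₁` is the shift of what remains with coefficient `-aₙ`.
-/

/-- The linear nearest-neighbour lattice equation `φₙ' = aₙ (φₙ₊₁ + φₙ₋₁) - γ φₙ`, imposed at the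
single time `t`, so that `a` and `γ` are the values of the coefficients at that time. Its formal
adjoint is the same equation with coefficients `-a`, `-γ`. -/
def IsLatticeFlowAt {𝕜 R E : Type*} [NontriviallyNormedField 𝕜] [AddCommGroup E] [Module 𝕜 E]
    [TopologicalSpace E] [ContinuousSMul 𝕜 E] [SMul R E]
    (a : ℤ → R) (γ : R) (φ : ℤ → 𝕜 → E) (t : 𝕜) : Prop :=
  ∀ n, HasDerivAt (φ n) (a n • (φ (n + 1) t + φ (n - 1) t) - γ • φ n t) t

/-- The flux of the density `φₙ₊₁ ψₙ + φₙ ψₙ₊₁`, where `φ` and `ψ` follow the lattice equation and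
its adjoint; here `φ` and `ψ` are the sequences of values at a fixed time. -/
def latticeFlux {R A : Type*} [Ring A] [SMul R A] (a : ℤ → R) (φ ψ : ℤ → A) (n : ℤ) : A :=
  a n • (φ (n + 1) * ψ (n - 1) - φ (n - 1) * ψ (n + 1))

namespace IsLatticeFlowAt

variable {𝕜 : Type*} [NontriviallyNormedField 𝕜] {t : 𝕜}

theorem apply {ι R E : Type*} [NormedAddCommGroup E] [NormedSpace 𝕜 E] [SMul R E]
    {a : ℤ → R} {γ : R} {φ : ℤ → 𝕜 → ι → E} (hφ : IsLatticeFlowAt a γ φ t) (j : ι) :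
    IsLatticeFlowAt a γ (fun n s => φ n s j) t :=
  fun n => hasDerivAt_pi.1 (hφ n) j

section ImaginaryCoefficients

variable {E : Type*} [AddCommGroup E] [Module 𝕜 E] [TopologicalSpace E] [ContinuousSMul 𝕜 E]
  [Module ℂ E] {v : ℤ → ℂ} {c : ℂ} {φ : ℤ → 𝕜 → E}

theorem of_I_smul_deriv (hd : ∀ n, DifferentiableAt 𝕜 (φ n) t)
    (h : ∀ n, I • deriv (φ n) t = v n • (φ (n + 1) t + φ (n - 1) t) - c • φ n t) :
    IsLatticeFlowAt (-I • v) (-I * c) φ t := by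
  intro n
  have hderiv : deriv (φ n) t = -I • (I • deriv (φ n) t) := by
    rw [smul_smul, neg_mul, I_mul_I, neg_neg, one_smul]
  rw [h n, smul_sub, smul_smul, smul_smul] at hderiv
  exact hderiv ▸ hasFDerivAt_iff_hasDerivAt.1 (hd n).hasFDerivAt

theorem adjoint_of_I_smul_deriv (hd : ∀ n, DifferentiableAt 𝕜 (φ n) t)
    (h : ∀ n, I • deriv (φ n) t = -(v n • (φ (n + 1) t + φ (n - 1) t)) + c • φ n t) :
    IsLatticeFlowAt (-(-I • v)) (-(-I * c)) φ t := by
  rw [← smul_neg, ← mul_neg]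
  refine of_I_smul_deriv hd fun n => ?_
  rw [h n, Pi.neg_apply, neg_smul, neg_smul, sub_neg_eq_add]

end ImaginaryCoefficients

variable {R A : Type*} [CommRing R] [NormedRing A] [NormedAlgebra 𝕜 A] [Algebra R A]
  {a : ℤ → R} {γ : R} {φ ψ : ℤ → 𝕜 → A}

theorem hasDerivAt_mul (hφ : IsLatticeFlowAt a γ φ t) (hψ : IsLatticeFlowAt (-a) (-γ) ψ t)
    (m n : ℤ) :
    HasDerivAt (fun s => φ m s * ψ n s)
      (a m • ((φ (m + 1) t + φ (m - 1) t) * ψ n t)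
        - a n • (φ m t * (ψ (n + 1) t + ψ (n - 1) t))) t := by
  refine ((hφ m).mul (hψ n)).congr_deriv ?_
  simp only [Pi.neg_apply, sub_mul, mul_sub, smul_mul_assoc, mul_smul_comm]
  module

theorem hasDerivAt_density (hφ : IsLatticeFlowAt a γ φ t) (hψ : IsLatticeFlowAt (-a) (-γ) ψ t)
    (n : ℤ) :
    HasDerivAt (fun s => φ (n + 1) s * ψ n s + φ n s * ψ (n + 1) s)
      (latticeFlux a (φ · t) (ψ · t) (n + 1) - latticeFlux a (φ · t) (ψ · t) n) t := by
  refine ((hφ.hasDerivAt_mul hψ (n + 1) n).add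
    (hφ.hasDerivAt_mul hψ n (n + 1))).congr_deriv ?_
  simp only [latticeFlux, add_sub_cancel_right, add_mul, mul_add]
  module

end IsLatticeFlowAt

theorem stmt9_general {𝕜 ι κ : Type*} [NontriviallyNormedField 𝕜] [NormedAlgebra 𝕜 ℂ]
    {S : ℤ → 𝕜 → ι → ℂ} {Sb : ℤ → 𝕜 → κ → ℂ} {v : ℤ → ℂ} {c : ℂ} {t : 𝕜}
    (hSd : ∀ n, DifferentiableAt 𝕜 (S n) t) (hSbd : ∀ n, DifferentiableAt 𝕜 (Sb n) t)
    (hS : ∀ n, I • deriv (S n) t = v n • (S (n + 1) t + S (n - 1) t) - c • S n t)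
    (hSb : ∀ n, I • deriv (Sb n) t = -(v n • (Sb (n + 1) t + Sb (n - 1) t)) + c • Sb n t)
    (j : ι) (k : κ) (n : ℤ) :
    HasDerivAt (fun s => S (n + 1) s j * Sb n s k + S n s j * Sb (n + 1) s k)
      (-I * v (n + 1) * (S (n + 2) t j * Sb n t k - S n t j * Sb (n + 2) t k)
        + I * v n * (S (n + 1) t j * Sb (n - 1) t k - S (n - 1) t j * Sb (n + 1) t k)) t := by
  have hS_flow : IsLatticeFlowAt (-I • v) (-I * c) S t := .of_I_smul_deriv hSd hS
  have hSb_flow : IsLatticeFlowAt (-(-I • v)) (-(-I * c)) Sb t :=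
    .adjoint_of_I_smul_deriv hSbd hSb
  refine ((hS_flow.apply j).hasDerivAt_density (hSb_flow.apply k) n).congr_deriv ?_
  simp only [latticeFlux, Pi.smul_apply, smul_eq_mul, add_sub_cancel_right, add_assoc,
    one_add_one_eq_two]
  ring

theorem stmt9 {N : ℕ} (hN : 1 ≤ N)
    (S Sb : ℤ → ℝ → Fin N → ℂ) (v : ℤ → ℝ → ℂ) (c : ℂ)
    (hSd : ∀ n, Differentiable ℝ (S n)) (hSbd : ∀ n, Differentiable ℝ (Sb n))
    (hvd : ∀ n, Differentiable ℝ (v n))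
    (h1 : ∀ (n : ℤ) (t : ℝ),
      Complex.I • deriv (S n) t = (v n t) • (S (n+1) t + S (n-1) t) - c • S n t)
    (h2 : ∀ (n : ℤ) (t : ℝ),
      Complex.I • deriv (Sb n) t = -((v n t) • (Sb (n+1) t + Sb (n-1) t)) + c • Sb n t)
    (h3 : ∀ (n : ℤ) (t : ℝ), deriv (v n) t = (1/2) * v n t *
      ((pair (S (n+1) t) (Sb n t) + pair (S n t) (Sb (n+1) t))
        - (pair (S n t) (Sb (n-1) t) + pair (S (n-1) t) (Sb n t)))) :
    ∀ (j k : Fin N) (n : ℤ) (t : ℝ),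
      deriv (fun s => S (n+1) s j * Sb n s k + S n s j * Sb (n+1) s k) t
      = -Complex.I * v (n+1) t * (S (n+2) t j * Sb n t k - S n t j * Sb (n+2) t k)
        + Complex.I * v n t * (S (n+1) t j * Sb (n-1) t k - S (n-1) t j * Sb (n+1) t k) :=
  fun j k n t =>
    (stmt9_general (v := fun m => v m t) (hSd · t) (hSbd · t) (h1 · t) (h2 · t) j k n).deriv
end

section
/- Suppose scalar sequences S_n(t), S̄_n(t), v_n(t) ∈ ℂ (n ∈ ℤ, t ∈ ℝ, differentiable in t) satisfy the scalar discrete Yajima–Oikawa system: i S_{n,t} = v_n (S_{n+1} + S_{n−1}) − c S_n, i S̄_{n,t} = −v_n (S̄_{n+1} + S̄_{n−1}) + c S̄_n, and v_{n,t} = (1/2) v_n [ (S_{n+1} S̄_n + S_n S̄_{n+1}) − (S_n S̄_{n−1} + S_{n−1} S̄_n) ], for some constant c ∈ ℂ. Then for all n and t the following conservation law holds: d/dt { v_n (S_{n+1} + S_{n−1})(S̄_{n+1} + S̄_{n−1}) + (i/4)[ (S_{n+1} S̄_n)² − (S_n S̄_{n+1})² ] } = Δ⁺{ −i v_n v_{n−1}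 [ (S_{n+1} + S_{n−1})(S̄_n + S̄_{n−2}) − (S_n + S_{n−2})(S̄_{n+1} + S̄_{n−1}) ] + (1/2) v_n [ S_{n−1} S̄_{n−1} (S_n S̄_{n−1} + S_{n−1} S̄_n) + S_{n+1} S̄_{n−1} S_n S̄_{n−1} + S_{n−1} S̄_{n+1} S_{n−1} S̄_n ] }. -/
/-!
Write `uₙ = Sₙ₊₁ + Sₙ₋₁`, `ūₙ = Sbₙ₊₁ + Sbₙ₋₁`, `pₙ = Sₙ₊₁ Sbₙ` and `qₙ = Sₙ Sbₙ₊₁`. The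
constant `c` cancels from the derivatives of `uₙ ūₙ`, `pₙ` and `qₙ`. In the derivative of
`vₙ uₙ ūₙ`, the part coming from `uₙ ūₙ` telescopes by itself, and the part coming from `vₙ` leaves
`vₙ (pₙ + qₙ - pₙ₋₁ - qₙ₋₁) uₙ ūₙ`, up to a constant. The correction `pₙ² - qₙ²` is there to cancel
this term: up to a constant its derivative is `Kₙ₊₁ - vₙ (pₙ Sₙ₊₁ ūₙ + qₙ Sbₙ₊₁ uₙ)`, where
`Kₙ = vₙ (pₙ₋₁ uₙ Sbₙ₋₁ + qₙ₋₁ ūₙ Sₙ₋₁)`, and since `pₙ Sₙ₋₁ = qₙ₋₁ Sₙ₊₁` and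
`qₙ Sbₙ₋₁ = pₙ₋₁ Sbₙ₊₁`, the term subtracted from `Kₙ₊₁` is the one to be cancelled plus `Kₙ`.
-/

namespace DiscreteYajimaOikawa

section Ring

variable {R : Type*} [CommRing R]

/-- The sum of the two neighbours of site `n`, on which the potential `vₙ` acts. A time-dependent
sequence is covered by taking for `R` a ring of functions. -/
def neighborSum (f : ℤ → R) (n : ℤ) : R :=
  f (n + 1) + f (n - 1)

/-- The product `fₙ₊₁ gₙ` across the bond from `n` to `n + 1`; `bond S Sb` is the
`pₙ = Sₙ₊₁ Sbₙ` and `bond Sb S` the `qₙ = Sₙ Sbₙ₊₁` of the conserved density. -/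
def bond (f g : ℤ → R) (n : ℤ) : R :=
  f (n + 1) * g n

/-- The part of the flux that is quadratic in `v`; it transports `vₙ uₙ ūₙ`. -/
def crossCurrent (f g v : ℤ → R) (n : ℤ) : R :=
  v n * v (n - 1) * (neighborSum f n * neighborSum g (n - 1)
    - neighborSum f (n - 1) * neighborSum g n)

/-- The part of the flux that is linear in `v`; it transports `pₙ² - qₙ²`. The bracket of
the published flux is factored here through the neighbour sums. -/
def bondCurrent (f g v : ℤ → R) (n : ℤ) : R :=
  v n * (bond f g (n - 1) * neighborSum f n * g (n - 1)
    + bond g f (n - 1) * neighborSum g n * f (n - 1))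

theorem bond_mul_neighborSum_add_swap (f g : ℤ → R) (n : ℤ) :
    bond f g n * f (n + 1) * neighborSum g n + bond g f n * g (n + 1) * neighborSum f n =
      (bond f g n + bond g f n - (bond f g (n - 1) + bond g f (n - 1)))
          * neighborSum f n * neighborSum g n
        + (bond f g (n - 1) * neighborSum f n * g (n - 1)
          + bond g f (n - 1) * neighborSum g n * f (n - 1)) := by
  simp only [bond, neighborSum, sub_add_cancel]
  ring

end Ring

variable {𝕜 𝔸 : Type*} [NontriviallyNormedField 𝕜] [NormedCommRing 𝔸] [NormedAlgebra 𝕜 𝔸]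

/-- The scalar discrete Yajima–Oikawa system at the instant `t`, with values in a commutative normed
algebra. The imaginary unit is replaced by any unit `ι`, and the coupling of `v` to the bonds is
`2 * κ`, so that no division is needed; the usual system has `ι = i` and `κ = 1 / 4`. -/
structure IsSolutionAt (ι : 𝔸ˣ) (κ c : 𝔸) (S Sb v : ℤ → 𝕜 → 𝔸) (t : 𝕜) : Prop where
  differentiableAt_left (n : ℤ) : DifferentiableAt 𝕜 (S n) t
  differentiableAt_right (n : ℤ) : DifferentiableAt 𝕜 (Sb n) t
  differentiableAt_potential (n : ℤ) : DifferentiableAt 𝕜 (v n) t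
  mul_deriv_left (n : ℤ) :
    ι * deriv (S n) t = v n t * neighborSum S n t - c * S n t
  mul_deriv_right (n : ℤ) :
    ι * deriv (Sb n) t = -(v n t * neighborSum Sb n t) + c * Sb n t
  deriv_potential (n : ℤ) :
    deriv (v n) t = 2 * κ * v n t *
      (bond S Sb n t + bond Sb S n t - (bond S Sb (n - 1) t + bond Sb S (n - 1) t))

/-- The conserved density `vₙ uₙ ūₙ + κ ι (pₙ² - qₙ²)`. -/
def density (ι : 𝔸ˣ) (κ : 𝔸) (S Sb v : ℤ → 𝕜 → 𝔸) (n : ℤ) (t : 𝕜) : 𝔸 :=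
  v n t * (neighborSum S n t * neighborSum Sb n t)
    + κ * (ι * (bond S Sb n t ^ 2 - bond Sb S n t ^ 2))

/-- The flux whose forward difference is the time derivative of `density`. -/
def flux (ι : 𝔸ˣ) (κ : 𝔸) (S Sb v : ℤ → 𝕜 → 𝔸) (n : ℤ) (t : 𝕜) : 𝔸 :=
  ↑ι⁻¹ * crossCurrent S Sb v n t + 2 * κ * bondCurrent S Sb v n t

namespace IsSolutionAt

variable {ι : 𝔸ˣ} {κ c : 𝔸} {S Sb v : ℤ → 𝕜 → 𝔸} {t : 𝕜}

theorem symm (h : IsSolutionAt ι κ c S Sb v t) : IsSolutionAt (-ι) κ c Sb S v t where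
  differentiableAt_left := h.differentiableAt_right
  differentiableAt_right := h.differentiableAt_left
  differentiableAt_potential := h.differentiableAt_potential
  mul_deriv_left n := by
    rw [Units.val_neg, neg_mul, h.mul_deriv_right]
    ring
  mul_deriv_right n := by
    rw [Units.val_neg, neg_mul, h.mul_deriv_left]
    ring
  deriv_potential n := by
    rw [h.deriv_potential]
    ring

theorem hasDerivAt_left (h : IsSolutionAt ι κ c S Sb v t) (n : ℤ) :
    HasDerivAt (S n) (↑ι⁻¹ * (v n t * neighborSum S n t - c * S n t)) t := by
  rw [← h.mul_deriv_left, Units.inv_mul_cancel_left]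
  exact (h.differentiableAt_left n).hasDerivAt

theorem hasDerivAt_right (h : IsSolutionAt ι κ c S Sb v t) (n : ℤ) :
    HasDerivAt (Sb n) (-↑ι⁻¹ * (v n t * neighborSum Sb n t - c * Sb n t)) t := by
  simpa only [inv_neg, Units.val_neg] using h.symm.hasDerivAt_left n

theorem hasDerivAt_potential (h : IsSolutionAt ι κ c S Sb v t) (n : ℤ) :
    HasDerivAt (v n) (2 * κ * v n t *
      (bond S Sb n t + bond Sb S n t - (bond S Sb (n - 1) t + bond Sb S (n - 1) t))) t := by
  rw [← h.deriv_potential]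
  exact (h.differentiableAt_potential n).hasDerivAt

theorem hasDerivAt_neighborSum_left (h : IsSolutionAt ι κ c S Sb v t) (n : ℤ) :
    HasDerivAt (neighborSum S n)
      (↑ι⁻¹ * (v (n + 1) t * neighborSum S (n + 1) t + v (n - 1) t * neighborSum S (n - 1) t
        - c * neighborSum S n t)) t := by
  refine ((h.hasDerivAt_left (n + 1)).add (h.hasDerivAt_left (n - 1))).congr_deriv ?_
  rw [show neighborSum S n t = S (n + 1) t + S (n - 1) t from rfl]
  ring

theorem hasDerivAt_neighborSum_right (h : IsSolutionAt ι κ c S Sb v t) (n : ℤ) :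
    HasDerivAt (neighborSum Sb n)
      (-↑ι⁻¹ * (v (n + 1) t * neighborSum Sb (n + 1) t + v (n - 1) t * neighborSum Sb (n - 1) t
        - c * neighborSum Sb n t)) t := by
  simpa only [inv_neg, Units.val_neg] using h.symm.hasDerivAt_neighborSum_left n

theorem hasDerivAt_bond_left (h : IsSolutionAt ι κ c S Sb v t) (n : ℤ) :
    HasDerivAt (bond S Sb n)
      (↑ι⁻¹ * (v (n + 1) t * neighborSum S (n + 1) t * Sb n t
        - v n t * S (n + 1) t * neighborSum Sb n t)) t := by
  refine ((h.hasDerivAt_left (n + 1)).mul (h.hasDerivAt_right n)).congr_deriv ?_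
  ring

theorem hasDerivAt_bond_right (h : IsSolutionAt ι κ c S Sb v t) (n : ℤ) :
    HasDerivAt (bond Sb S n)
      (-↑ι⁻¹ * (v (n + 1) t * neighborSum Sb (n + 1) t * S n t
        - v n t * Sb (n + 1) t * neighborSum S n t)) t := by
  simpa only [inv_neg, Units.val_neg] using h.symm.hasDerivAt_bond_left n

theorem hasDerivAt_potential_mul_neighborSum (h : IsSolutionAt ι κ c S Sb v t) (n : ℤ) :
    HasDerivAt (v n * (neighborSum S n * neighborSum Sb n))
      (2 * κ * v n t *
          (bond S Sb n t + bond Sb S n t - (bond S Sb (n - 1) t + bond Sb S (n - 1) t))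
          * (neighborSum S n t * neighborSum Sb n t)
        + ↑ι⁻¹ * fwdDiff 1 (crossCurrent S Sb v) n t) t := by
  refine ((h.hasDerivAt_potential n).mul ((h.hasDerivAt_neighborSum_left n).mul
    (h.hasDerivAt_neighborSum_right n))).congr_deriv ?_
  simp only [fwdDiff, crossCurrent, add_sub_cancel_right, Pi.mul_apply, Pi.sub_apply]
  ring

theorem hasDerivAt_bond_sq_sub_bond_sq (h : IsSolutionAt ι κ c S Sb v t) (n : ℤ) :
    HasDerivAt (fun s ↦ ι * (bond S Sb n s ^ 2 - bond Sb S n s ^ 2))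
      (2 * (bondCurrent S Sb v (n + 1) t - v n t *
        (bond S Sb n t * S (n + 1) t * neighborSum Sb n t
          + bond Sb S n t * Sb (n + 1) t * neighborSum S n t))) t := by
  refine ((((h.hasDerivAt_bond_left n).pow 2).sub
    ((h.hasDerivAt_bond_right n).pow 2)).const_mul (ι : 𝔸)).congr_deriv ?_
  simp only [bondCurrent, add_sub_cancel_right, Pi.mul_apply, Pi.add_apply]
  linear_combination (2 * (bond S Sb n t * (v (n + 1) t * neighborSum S (n + 1) t * Sb n t
      - v n t * S (n + 1) t * neighborSum Sb n t)
    + bond Sb S n t * (v (n + 1) t * neighborSum Sb (n + 1) t * S n t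
      - v n t * Sb (n + 1) t * neighborSum S n t))) * ι.mul_inv

end IsSolutionAt

section ImaginaryUnit

variable (S Sb v : ℤ → ℝ → ℂ) (n : ℤ)

theorem density_I :
    density (Units.mk0 Complex.I Complex.I_ne_zero) (1 / 4) S Sb v n = fun s ↦
      v n s * (S (n + 1) s + S (n - 1) s) * (Sb (n + 1) s + Sb (n - 1) s)
        + (Complex.I / 4) * ((S (n + 1) s * Sb n s) ^ 2 - (S n s * Sb (n + 1) s) ^ 2) := by
  funext s
  simp only [density, neighborSum, bond, Pi.add_apply, Pi.mul_apply, Units.val_mk0]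
  ring

theorem flux_I (t : ℝ) :
    flux (Units.mk0 Complex.I Complex.I_ne_zero) (1 / 4) S Sb v n t =
      -Complex.I * v n t * v (n - 1) t *
          ((S (n + 1) t + S (n - 1) t) * (Sb n t + Sb (n - 2) t)
            - (S n t + S (n - 2) t) * (Sb (n + 1) t + Sb (n - 1) t))
        + (1 / 2) * v n t *
          (S (n - 1) t * Sb (n - 1) t * (S n t * Sb (n - 1) t + S (n - 1) t * Sb n t)
            + S (n + 1) t * Sb (n - 1) t * S n t * Sb (n - 1) t
            + S (n - 1) t * Sb (n + 1) t * S (n - 1) t * Sb n t) := by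
  simp only [flux, crossCurrent, bondCurrent, neighborSum, bond, Pi.sub_apply, Pi.add_apply,
    Pi.mul_apply, Units.val_inv_eq_inv_val, Units.val_mk0, Complex.inv_I, sub_add_cancel,
    show n - 1 - 1 = n - 2 by ring]
  ring

end ImaginaryUnit

end DiscreteYajimaOikawa

open DiscreteYajimaOikawa

theorem stmt11_general {𝕜 𝔸 : Type*} [NontriviallyNormedField 𝕜] [NormedCommRing 𝔸]
    [NormedAlgebra 𝕜 𝔸] {ι : 𝔸ˣ} {κ c : 𝔸} {S Sb v : ℤ → 𝕜 → 𝔸} {t : 𝕜}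
    (h : IsSolutionAt ι κ c S Sb v t) (n : ℤ) :
    HasDerivAt (density ι κ S Sb v n) (fwdDiff 1 (flux ι κ S Sb v) n t) t := by
  refine ((h.hasDerivAt_potential_mul_neighborSum n).add
    ((h.hasDerivAt_bond_sq_sub_bond_sq n).const_mul κ)).congr_deriv ?_
  have identity := congrFun (bond_mul_neighborSum_add_swap S Sb n) t
  simp only [Pi.add_apply, Pi.mul_apply, Pi.sub_apply] at identity
  rw [identity]
  simp only [fwdDiff, flux, bondCurrent, Pi.sub_apply, Pi.mul_apply, Pi.add_apply]
  ring

theorem stmt11 (S Sb v : ℤ → ℝ → ℂ) (c : ℂ)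
    (hSd : ∀ n, Differentiable ℝ (S n)) (hSbd : ∀ n, Differentiable ℝ (Sb n))
    (hvd : ∀ n, Differentiable ℝ (v n))
    (h1 : ∀ (n : ℤ) (t : ℝ),
      Complex.I * deriv (S n) t = v n t * (S (n+1) t + S (n-1) t) - c * S n t)
    (h2 : ∀ (n : ℤ) (t : ℝ),
      Complex.I * deriv (Sb n) t = -(v n t * (Sb (n+1) t + Sb (n-1) t)) + c * Sb n t)
    (h3 : ∀ (n : ℤ) (t : ℝ), deriv (v n) t = (1/2) * v n t *
      ((S (n+1) t * Sb n t + S n t * Sb (n+1) t)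
        - (S n t * Sb (n-1) t + S (n-1) t * Sb n t))) :
    ∀ (n : ℤ) (t : ℝ),
      deriv (fun s =>
        v n s * (S (n+1) s + S (n-1) s) * (Sb (n+1) s + Sb (n-1) s)
        + (Complex.I/4) * ((S (n+1) s * Sb n s)^2 - (S n s * Sb (n+1) s)^2)) t
      = (-Complex.I * v (n+1) t * v n t *
            ((S (n+2) t + S n t) * (Sb (n+1) t + Sb (n-1) t)
              - (S (n+1) t + S (n-1) t) * (Sb (n+2) t + Sb n t))
          + (1/2) * v (n+1) t *
            (S n t * Sb n t * (S (n+1) t * Sb n t + S n t * Sb (n+1) t)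
              + S (n+2) t * Sb n t * S (n+1) t * Sb n t
              + S n t * Sb (n+2) t * S n t * Sb (n+1) t))
        - (-Complex.I * v n t * v (n-1) t *
            ((S (n+1) t + S (n-1) t) * (Sb n t + Sb (n-2) t)
              - (S n t + S (n-2) t) * (Sb (n+1) t + Sb (n-1) t))
          + (1/2) * v n t *
            (S (n-1) t * Sb (n-1) t * (S n t * Sb (n-1) t + S (n-1) t * Sb n t)
              + S (n+1) t * Sb (n-1) t * S n t * Sb (n-1) t
              + S (n-1) t * Sb (n+1) t * S (n-1) t * Sb n t)) := by
  intro n t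
  have solution : IsSolutionAt (Units.mk0 Complex.I Complex.I_ne_zero) (1 / 4) c S Sb v t :=
    ⟨(hSd · t), (hSbd · t), (hvd · t), (h1 · t), (h2 · t), fun m ↦ by
      rw [h3]
      simp only [bond, Pi.mul_apply, sub_add_cancel]
      ring⟩
  rw [← density_I, (stmt11_general solution n).deriv, fwdDiff, Pi.sub_apply, flux_I, flux_I]
  simp only [add_sub_cancel_right, show n + 1 + 1 = n + 2 by ring,
    show n + 1 - 2 = n - 1 by ring]
end

section
/- Let v_n(t), ψ_n(t) ∈ ℂ (n ∈ ℤ, t ∈ ℝ) with ψ differentiable in t, let c, λ ∈ ℂ with λ ≠ 0, and suppose v_n(t) ≠ 0 and ψ_n(t) ≠ 0 for all n and t. Suppose ψ satisfies the time evolution i ψ_{n,t} = v_n (ψ_{n+1} + ψ_{n−1}) − c ψ_n for all n and t. Define F_n(t) := λ ψ_n(t) / (v_n(t) ψ_{n−1}(t)). Then for all n and t the generating conservation identity holds: ψ_{n,t}/ψ_n − ψ_{n−1,t}/ψ_{n−1} = Δ⁺[ −i ( λ^{−1} v_{n−1} v_n F_n + λ F_{n−1}^{−1} ) ], i.e.,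 the left-hand side equals −i( λ^{−1} v_n v_{n+1} F_{n+1} + λ F_n^{−1} ) + i( λ^{−1} v_{n−1} v_n F_n + λ F_{n−1}^{−1} ). -/
/-!
Dividing the evolution equation by `ψ n` gives `ψ_t / ψ = α (v n (ψ (n+1) + ψ (n-1)) / ψ n - c)`.
Both neighbour terms can be written with `F n = λ ψ n / (v n ψ (n-1))`: the backward one is
`λ / F n` and the forward one is `λ⁻¹ v n v (n+1) F (n+1)`, so that the logarithmic derivative is
a flux at `n + 1`, up to a constant which does not depend on `n` and cancels in the difference.
-/

open scoped fwdDiff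

section Lattice

variable {K : Type*} [Field K] {lam : K}

/-- The Riccati variable `F n = λ ψ n / (v n ψ (n-1))` of a lattice wave function `ψ`, in which the
conserved flux is expressed. -/
def riccatiVar (lam : K) (v ψ : ℤ → K) (n : ℤ) : K :=
  lam * ψ n / (v n * ψ (n - 1))

/-- The flux `λ⁻¹ v (n-1) v n F n + λ / F (n-1)` of the generating conservation law, without the
coefficient of the time evolution (`-i` in `stmt12`). -/
def conservationFlux (lam : K) (v F : ℤ → K) (n : ℤ) : K :=
  lam⁻¹ * v (n - 1) * v n * F n + lam * (F (n - 1))⁻¹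

lemma mul_inv_riccatiVar (hlam : lam ≠ 0) (v ψ : ℤ → K) (n : ℤ) :
    lam * (riccatiVar lam v ψ n)⁻¹ = v n * ψ (n - 1) / ψ n := by
  unfold riccatiVar
  field_simp

lemma inv_mul_riccatiVar (hlam : lam ≠ 0) {v : ℤ → K} (ψ : ℤ → K) {n : ℤ} (hv : v n ≠ 0) :
    lam⁻¹ * v n * riccatiVar lam v ψ n = ψ n / ψ (n - 1) := by
  unfold riccatiVar
  field_simp

lemma conservationFlux_riccatiVar_add_one (hlam : lam ≠ 0) {v : ℤ → K} (ψ : ℤ → K) {n : ℤ}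
    (hv : v (n + 1) ≠ 0) :
    conservationFlux lam v (riccatiVar lam v ψ) (n + 1)
      = v n * (ψ (n + 1) + ψ (n - 1)) / ψ n := by
  have hforward := inv_mul_riccatiVar hlam ψ hv
  have hbackward := mul_inv_riccatiVar hlam v ψ n
  rw [add_sub_cancel_right] at hforward
  calc conservationFlux lam v (riccatiVar lam v ψ) (n + 1)
      = v n * (lam⁻¹ * v (n + 1) * riccatiVar lam v ψ (n + 1))
          + lam * (riccatiVar lam v ψ n)⁻¹ := by
        rw [conservationFlux, add_sub_cancel_right]; ring
    _ = v n * (ψ (n + 1) + ψ (n - 1)) / ψ n := by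
        rw [hforward, hbackward]; ring

end Lattice

section TimeEvolution

variable {𝕜 K : Type*} [NontriviallyNormedField 𝕜] [NontriviallyNormedField K] [NormedAlgebra 𝕜 K]

lemma logDeriv_eq_conservationFlux_add_one {v : ℤ → K} {ψ : ℤ → 𝕜 → K} {α c lam : K} {t : 𝕜}
    {n : ℤ} (hlam : lam ≠ 0) (hv : v (n + 1) ≠ 0) (hψ : ψ n t ≠ 0)
    (hM : HasDerivAt (ψ n) (α * (v n * (ψ (n + 1) t + ψ (n - 1) t) - c * ψ n t)) t) :
    logDeriv (ψ n) t
      = α * conservationFlux lam v (riccatiVar lam v (ψ · t)) (n + 1) - α * c := by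
  rw [logDeriv_apply, hM.deriv, conservationFlux_riccatiVar_add_one hlam _ hv]
  field_simp

theorem stmt12_general {v : ℤ → K} {ψ : ℤ → 𝕜 → K} {α c lam : K} {t : 𝕜} (hlam : lam ≠ 0)
    (hv : ∀ n, v n ≠ 0) (hψ : ∀ n, ψ n t ≠ 0)
    (hM : ∀ n, HasDerivAt (ψ n) (α * (v n * (ψ (n + 1) t + ψ (n - 1) t) - c * ψ n t)) t) (n : ℤ) :
    logDeriv (ψ n) t - logDeriv (ψ (n - 1)) t
      = Δ_[1] (fun m ↦ α * conservationFlux lam v (riccatiVar lam v (ψ · t)) m) n := by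
  have hlog (m : ℤ) := logDeriv_eq_conservationFlux_add_one hlam (hv (m + 1)) (hψ m) (hM m)
  rw [fwdDiff, hlog n, hlog (n - 1), sub_add_cancel, sub_sub_sub_cancel_right]

end TimeEvolution

lemma hasDerivAt_neg_I_mul_of_I_mul_deriv_eq {f : ℝ → ℂ} {t : ℝ} {z : ℂ}
    (hf : DifferentiableAt ℝ f t) (h : Complex.I * deriv f t = z) :
    HasDerivAt f (-Complex.I * z) t := by
  rw [← Complex.inv_I, ← (eq_inv_mul_iff_mul_eq₀ Complex.I_ne_zero).2 h]
  exact hf.hasDerivAt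

theorem stmt12 (v ψ : ℤ → ℝ → ℂ) (c lam : ℂ) (hlam : lam ≠ 0)
    (hψd : ∀ n, Differentiable ℝ (ψ n))
    (hv0 : ∀ (n : ℤ) (t : ℝ), v n t ≠ 0) (hψ0 : ∀ (n : ℤ) (t : ℝ), ψ n t ≠ 0)
    (hM : ∀ (n : ℤ) (t : ℝ),
      Complex.I * deriv (ψ n) t = v n t * (ψ (n+1) t + ψ (n-1) t) - c * ψ n t)
    (F : ℤ → ℝ → ℂ)
    (hF : ∀ (n : ℤ) (t : ℝ), F n t = lam * ψ n t / (v n t * ψ (n-1) t)) :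
    ∀ (n : ℤ) (t : ℝ),
      deriv (ψ n) t / ψ n t - deriv (ψ (n-1)) t / ψ (n-1) t
      = -Complex.I * (lam⁻¹ * v n t * v (n+1) t * F (n+1) t + lam * (F n t)⁻¹)
        + Complex.I * (lam⁻¹ * v (n-1) t * v n t * F n t + lam * (F (n-1) t)⁻¹) := by
  intro n t
  have hlaw := stmt12_general hlam (hv0 · t) (hψ0 · t)
    (fun m ↦ hasDerivAt_neg_I_mul_of_I_mul_deriv_eq (hψd m t) (hM m t)) n
  simpa only [logDeriv_apply, fwdDiff, conservationFlux, riccatiVar, hF, add_sub_cancel_right,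
    neg_mul, sub_neg_eq_add] using hlaw
end

section
/- Let λ ∈ ℂ with λ ≠ 0, and let S_n, S̄_n ∈ ℂ^N, v_n, ψ_n ∈ ℂ, φ_n, χ_n ∈ ℂ^N (n ∈ ℤ) satisfy v_n ≠ 0 and ψ_n ≠ 0 for all n, together with the spectral problem: v_n(ψ_{n+1} + ψ_{n−1}) = λ ψ_n − ⟨S_n, φ_n⟩ − ⟨χ_n, S̄_n⟩, φ_{n+1} − φ_n = (i/2) S̄_n (ψ_{n+1} + ψ_{n−1}), χ_{n+1} + χ_n = (i/2) S_n (ψ_{n+1} + ψ_{n−1}), for all n. Define F_n ∈ ℂ and G_n, H_n ∈ ℂ^N by ψ_n/ψ_{n−1} = λ^{−1} v_n F_n, φ_n/ψ_{n−1} = −(i/2) S̄_n + λ^{−1} v_n G_n, and χ_n/ψ_{n−1} = (i/2) S_n + λ^{−1} v_n H_n. Then for all n the following hold: F_n = 1 + λ^{−2} v_n v_{n+1} F_n F_{n+1} + λ^{−1} ⟨S_n, G_n⟩ + λ^{−1} ⟨H_n, S̄_n⟩; G_n = F_n ( −(i/2) S̄_{n+1} + λ^{−1} v_{n+1} G_{n+1}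 ) − (i/(2λ)) v_{n+1} F_n F_{n+1} S̄_n; and H_n = −F_n ( (i/2) S_{n+1} + λ^{−1} v_{n+1} H_{n+1} ) + (i/(2λ)) v_{n+1} F_n F_{n+1} S_n. -/
open Complex BigOperators

/-!
Dividing the spectral problem by `ψ_{n-1}` turns it into a system for the ratios `ψ_n / ψ_{n-1}`,
`φ_n / ψ_{n-1}` and `χ_n / ψ_{n-1}`, which is quadratic because
`ψ_{n+1} / ψ_{n-1} = (ψ_n / ψ_{n-1}) (ψ_{n+1} / ψ_n)`. The leading terms `-(i/2) S̄_n` and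
`(i/2) S_n` of the vector ratios cancel against each other in the scalar equation and against the
constant term `1` of `ψ_{n+1} / ψ_{n-1} + 1` in the vector equations; what is left over is divisible
by `λ⁻¹ v_n`. The equation for `χ` is the one for `φ` under `φ ↦ -χ`, `G ↦ -H`.
-/

section Riccati

variable {K V W : Type*} [Field K] [AddCommGroup V] [Module K V] [AddCommGroup W] [Module K W]

theorem div_mul_div_add_one {p q : K} (hp : p ≠ 0) (hq : q ≠ 0) (r : K) :
    q / p * (r / q) + 1 = p⁻¹ * (r + p) := by
  field_simp

theorem scalar_ratio_riccati (B : V →ₗ[K] W →ₗ[K] K) {lam p q r v : K} {s x : V} {t w : W}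
    (hp : p ≠ 0) (hq : q ≠ 0) (hstep : v * (r + p) = lam * q - B s w - B x t) :
    v * (q / p * (r / q) + 1) = lam * (q / p) - B s (p⁻¹ • w) - B (p⁻¹ • x) t := by
  simp only [map_smul, LinearMap.smul_apply, smul_eq_mul]
  rw [div_mul_div_add_one hp hq]
  linear_combination p⁻¹ * hstep

theorem vector_ratio_riccati {κ p q r : K} {w w' t : W} (hp : p ≠ 0) (hq : q ≠ 0)
    (hstep : w' - w = (κ * (r + p)) • t) :
    (q / p) • q⁻¹ • w' - p⁻¹ • w = (κ * (q / p * (r / q) + 1)) • t := by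
  have hcancel : (q / p) • q⁻¹ • w' = p⁻¹ • w' := by
    rw [smul_smul, div_mul_eq_mul_div, mul_inv_cancel₀ hq, one_div]
  rw [hcancel, ← smul_sub, hstep, smul_smul, div_mul_div_add_one hp hq, mul_left_comm]

theorem apply_neg_smul_add_add_apply_smul_add (B : V →ₗ[K] W →ₗ[K] K) (κ a : K)
    (s x : V) (t w : W) :
    B s (-κ • t + a • w) + B (κ • s + a • x) t = a * (B s w + B x t) := by
  simp only [map_add, map_smul, LinearMap.add_apply, LinearMap.smul_apply, smul_eq_mul]
  ring

theorem reduced_scalar_riccati (B : V →ₗ[K] W →ₗ[K] K) {κ lam p q r v v' F F' : K}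
    {s x H : V} {t w G : W} (hp : p ≠ 0) (hq : q ≠ 0)
    (hstep : v * (r + p) = lam * q - B s w - B x t)
    (hF : q / p = lam⁻¹ * v * F) (hF' : r / q = lam⁻¹ * v' * F')
    (hG : p⁻¹ • w = -κ • t + (lam⁻¹ * v) • G) (hH : p⁻¹ • x = κ • s + (lam⁻¹ * v) • H) :
    F = 1 + lam⁻¹ ^ 2 * v * v' * F * F' + lam⁻¹ * B s G + lam⁻¹ * B H t := by
  have ha : lam⁻¹ * v ≠ 0 := left_ne_zero_of_mul (hF ▸ div_ne_zero hq hp)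
  have hlam : lam ≠ 0 := inv_eq_zero.not.mp (left_ne_zero_of_mul ha)
  have hriccati := scalar_ratio_riccati B hp hq hstep
  rw [hF, hF', hG, hH] at hriccati
  have hpair := apply_neg_smul_add_add_apply_smul_add B κ (lam⁻¹ * v) s H t G
  apply mul_left_cancel₀ (right_ne_zero_of_mul ha)
  linear_combination -hriccati + hpair - v * F * mul_inv_cancel₀ hlam

theorem reduced_vector_riccati {κ a b p q r F F' : K} {w w' t G : W} (hp : p ≠ 0) (hq : q ≠ 0)
    (hstep : w' - w = (κ * (r + p)) • t) (hF : q / p = a * F) (hF' : r / q = b * F')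
    (hG : p⁻¹ • w = -κ • t + a • G) :
    G = F • q⁻¹ • w' - (κ * b * F * F') • t := by
  have ha : a ≠ 0 := left_ne_zero_of_mul (hF ▸ div_ne_zero hq hp)
  have hriccati := vector_ratio_riccati hp hq hstep
  rw [hF, hF', hG] at hriccati
  apply (smul_right_inj ha).mp
  linear_combination (norm := module) (-1 : K) • hriccati

theorem stmt13_general (B : V →ₗ[K] W →ₗ[K] K) (κ lam : K)
    (S : ℤ → V) (Sb : ℤ → W) (v ψ : ℤ → K) (φ : ℤ → W) (χ : ℤ → V)
    (hψ0 : ∀ n, ψ n ≠ 0)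
    (hL1 : ∀ n, v n * (ψ (n + 1) + ψ (n - 1)) = lam * ψ n - B (S n) (φ n) - B (χ n) (Sb n))
    (hL2 : ∀ n, φ (n + 1) - φ n = (κ * (ψ (n + 1) + ψ (n - 1))) • Sb n)
    (hL3 : ∀ n, χ (n + 1) + χ n = (κ * (ψ (n + 1) + ψ (n - 1))) • S n)
    (F : ℤ → K) (G : ℤ → W) (H : ℤ → V)
    (hF : ∀ n, ψ n / ψ (n - 1) = lam⁻¹ * v n * F n)
    (hG : ∀ n, (ψ (n - 1))⁻¹ • φ n = -κ • Sb n + (lam⁻¹ * v n) • G n)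
    (hH : ∀ n, (ψ (n - 1))⁻¹ • χ n = κ • S n + (lam⁻¹ * v n) • H n) (n : ℤ) :
    (F n = 1 + lam⁻¹ ^ 2 * v n * v (n + 1) * F n * F (n + 1)
        + lam⁻¹ * B (S n) (G n) + lam⁻¹ * B (H n) (Sb n))
      ∧ (G n = F n • (-κ • Sb (n + 1) + (lam⁻¹ * v (n + 1)) • G (n + 1))
          - (κ / lam * v (n + 1) * F n * F (n + 1)) • Sb n)
      ∧ (H n = -(F n • (κ • S (n + 1) + (lam⁻¹ * v (n + 1)) • H (n + 1)))
          + (κ / lam * v (n + 1) * F n * F (n + 1)) • S n) := by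
  have hp := hψ0 (n - 1)
  have hq := hψ0 n
  have hF' := hF (n + 1)
  have hG' := hG (n + 1)
  have hH' := hH (n + 1)
  rw [add_sub_cancel_right] at hF' hG' hH'
  have hnegχ : χ (n + 1) - -χ n = (κ * (ψ (n + 1) + ψ (n - 1))) • S n := by
    rw [sub_neg_eq_add, hL3]
  have hnegH : (ψ (n - 1))⁻¹ • -χ n = -κ • S n + (lam⁻¹ * v n) • -H n := by
    rw [smul_neg, hH, neg_add, neg_smul, smul_neg]
  rw [div_eq_mul_inv, mul_assoc κ, ← hG', ← hH']
  refine ⟨reduced_scalar_riccati B hp hq (hL1 n) (hF n) hF' (hG n) (hH n),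
    reduced_vector_riccati hp hq (hL2 n) (hF n) hF' (hG n), ?_⟩
  rw [neg_add_eq_sub, ← neg_sub, ← reduced_vector_riccati hp hq hnegχ (hF n) hF' hnegH, neg_neg]

end Riccati

theorem pair_eq_dotProductBilin {N : ℕ} (a b : Fin N → ℂ) : pair a b = dotProductBilin ℂ ℂ a b :=
  rfl

theorem stmt13 {N : ℕ} (hN : 1 ≤ N) (lam : ℂ) (hlam : lam ≠ 0)
    (S Sb : ℤ → Fin N → ℂ) (v ψ : ℤ → ℂ) (φ χ : ℤ → Fin N → ℂ)
    (hv0 : ∀ n : ℤ, v n ≠ 0) (hψ0 : ∀ n : ℤ, ψ n ≠ 0)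
    (hL1 : ∀ n : ℤ, v n * (ψ (n+1) + ψ (n-1))
      = lam * ψ n - pair (S n) (φ n) - pair (χ n) (Sb n))
    (hL2 : ∀ n : ℤ, φ (n+1) - φ n = ((Complex.I/2) * (ψ (n+1) + ψ (n-1))) • Sb n)
    (hL3 : ∀ n : ℤ, χ (n+1) + χ n = ((Complex.I/2) * (ψ (n+1) + ψ (n-1))) • S n)
    (F : ℤ → ℂ) (G H : ℤ → Fin N → ℂ)
    (hF : ∀ n : ℤ, ψ n / ψ (n-1) = lam⁻¹ * v n * F n)
    (hG : ∀ n : ℤ, (ψ (n-1))⁻¹ • φ n = (-(Complex.I/2)) • Sb n + (lam⁻¹ * v n) • G n)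
    (hH : ∀ n : ℤ, (ψ (n-1))⁻¹ • χ n = (Complex.I/2) • S n + (lam⁻¹ * v n) • H n) :
    ∀ n : ℤ,
      (F n = 1 + lam⁻¹^2 * v n * v (n+1) * F n * F (n+1)
        + lam⁻¹ * pair (S n) (G n) + lam⁻¹ * pair (H n) (Sb n))
      ∧ (G n = F n • ((-(Complex.I/2)) • Sb (n+1) + (lam⁻¹ * v (n+1)) • G (n+1))
          - (Complex.I / (2 * lam) * v (n+1) * F n * F (n+1)) • Sb n)
      ∧ (H n = -(F n • ((Complex.I/2) • S (n+1) + (lam⁻¹ * v (n+1)) • H (n+1)))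
          + (Complex.I / (2 * lam) * v (n+1) * F n * F (n+1)) • S n) := by
  simpa only [div_div, pair_eq_dotProductBilin] using stmt13_general (dotProductBilin ℂ ℂ)
    (Complex.I / 2) lam S Sb v ψ φ χ hψ0 hL1 hL2 hL3 F G H hF hG hH
end

section
/- Suppose S_n(t), S̄_n(t) ∈ ℂ^N and v_n(t) ∈ ℂ (n ∈ ℤ, t ∈ ℝ, differentiable in t) satisfy v_n(t) ≠ 0 for all n, t and the equation v_{n,t} = (1/2) v_n Δ⁺(⟨S_n, S̄_{n−1}⟩ + ⟨S_{n−1}, S̄_n⟩) for all n and t. Let w_n(t) ∈ ℂ (n ∈ ℤ) be differentiable in t with w_n(t) ≠ 0 and w_n = v_n w_{n−1} for all n and t. If there exists one index n₀ ∈ ℤ such that w_{n₀,t} = (1/2) w_{n₀} (⟨S_{n₀+1}, S̄_{n₀}⟩ + ⟨S_{n₀}, S̄_{n₀+1}⟩) for all t, then for every n ∈ ℤ and all t: w_{n,t} = (1/2) w_n (⟨S_{n+1}, S̄_n⟩ + ⟨S_n, S̄_{n+1}⟩). -/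
open Complex BigOperators

/-!
Put `J n = ⟨S (n + 1), Sb n⟩ + ⟨S n, Sb (n + 1)⟩` and `c = 1 / 2`. The recurrence
`w n = v n * w (n - 1)` makes `logDeriv (v n)` the difference of the logarithmic derivatives of
`w n` and `w (n - 1)`, while the evolution equation of `v` makes it `c * J n - c * J (n - 1)`.
Hence `logDeriv (w n) - c * J n` does not depend on `n`, and it vanishes at `n₀`.
-/

open Filter Topology

theorem sub_eq_sub_of_backwardDiff_eq {G : Type*} [AddCommGroup G] {a b : ℤ → G}
    (h : ∀ n, a n - a (n - 1) = b n - b (n - 1)) (m n : ℤ) : a m - b m = a n - b n := by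
  have periodic : Function.Periodic (a - b) 1 := fun k => by
    simpa only [Pi.sub_apply, add_sub_cancel_right] using
      sub_eq_sub_iff_sub_eq_sub.mp (h (k + 1))
  have eq_zero (k : ℤ) : (a - b) k = (a - b) 0 := by
    simpa only [smul_eq_mul, mul_one] using periodic.zsmul_eq k
  exact (eq_zero m).trans (eq_zero n).symm

section LogDeriv

variable {𝕜 𝕜' : Type*} [NontriviallyNormedField 𝕜] [NontriviallyNormedField 𝕜']
  [NormedAlgebra 𝕜 𝕜'] {t : 𝕜}

theorem logDeriv_eq_mul_iff {f : 𝕜 → 𝕜'} {c a : 𝕜'} (hf : f t ≠ 0) :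
    logDeriv f t = c * a ↔ deriv f t = c * f t * a := by
  rw [logDeriv_apply, div_eq_iff hf, mul_right_comm]

theorem logDeriv_eq_sub_of_eventuallyEq_mul {f g h : 𝕜 → 𝕜'} (hf : DifferentiableAt 𝕜 f t)
    (hh : DifferentiableAt 𝕜 h t) (hf0 : f t ≠ 0) (hh0 : h t ≠ 0) (hfgh : f =ᶠ[𝓝 t] g * h) :
    logDeriv g t = logDeriv f t - logDeriv h t := by
  have g_eq : g =ᶠ[𝓝 t] fun s => f s / h s := by
    filter_upwards [hfgh, hh.continuousAt.eventually_ne hh0] with s hs hs0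
    exact eq_div_of_mul_eq hs0 hs.symm
  rw [(logDeriv_congr_nhds g_eq).eq_of_nhds, logDeriv_div t hf0 hh0 hf hh]

theorem stmt17_general {v w : ℤ → 𝕜 → 𝕜'} {c : 𝕜'} {J : ℤ → 𝕜'}
    (hwd : ∀ n, DifferentiableAt 𝕜 (w n) t) (hw0 : ∀ n, w n t ≠ 0)
    (hveq : ∀ n, deriv (v n) t = c * v n t * (J n - J (n - 1)))
    (hwrec : ∀ n, w n =ᶠ[𝓝 t] v n * w (n - 1)) {n₀ : ℤ}
    (h0 : deriv (w n₀) t = c * w n₀ t * J n₀) (n : ℤ) :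
    deriv (w n) t = c * w n t * J n := by
  have hv0 (k : ℤ) : v k t ≠ 0 :=
    left_ne_zero_of_mul ((hwrec k).eq_of_nhds ▸ hw0 k)
  have backwardDiff_eq (k : ℤ) :
      logDeriv (w k) t - logDeriv (w (k - 1)) t = c * J k - c * J (k - 1) := by
    rw [← logDeriv_eq_sub_of_eventuallyEq_mul (hwd k) (hwd (k - 1)) (hw0 k) (hw0 (k - 1)) (hwrec k),
      (logDeriv_eq_mul_iff (hv0 k)).mpr (hveq k), mul_sub]
  have defect_eq : logDeriv (w n) t - c * J n = logDeriv (w n₀) t - c * J n₀ :=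
    sub_eq_sub_of_backwardDiff_eq backwardDiff_eq n n₀
  have defect_eq_zero : logDeriv (w n₀) t - c * J n₀ = 0 :=
    sub_eq_zero.mpr ((logDeriv_eq_mul_iff (hw0 n₀)).mpr h0)
  exact (logDeriv_eq_mul_iff (hw0 n)).mp (sub_eq_zero.mp (defect_eq.trans defect_eq_zero))

end LogDeriv

theorem stmt17 {N : ℕ} (hN : 1 ≤ N)
    (S Sb : ℤ → ℝ → Fin N → ℂ) (v w : ℤ → ℝ → ℂ)
    (hSd : ∀ n, Differentiable ℝ (S n)) (hSbd : ∀ n, Differentiable ℝ (Sb n))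
    (hvd : ∀ n, Differentiable ℝ (v n)) (hwd : ∀ n, Differentiable ℝ (w n))
    (hv0 : ∀ (n : ℤ) (t : ℝ), v n t ≠ 0) (hw0 : ∀ (n : ℤ) (t : ℝ), w n t ≠ 0)
    (hveq : ∀ (n : ℤ) (t : ℝ), deriv (v n) t = (1/2) * v n t *
      ((pair (S (n+1) t) (Sb n t) + pair (S n t) (Sb (n+1) t))
        - (pair (S n t) (Sb (n-1) t) + pair (S (n-1) t) (Sb n t))))
    (hwrec : ∀ (n : ℤ) (t : ℝ), w n t = v n t * w (n-1) t)
    (n₀ : ℤ)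
    (h0 : ∀ t : ℝ, deriv (w n₀) t = (1/2) * w n₀ t *
      (pair (S (n₀+1) t) (Sb n₀ t) + pair (S n₀ t) (Sb (n₀+1) t))) :
    ∀ (n : ℤ) (t : ℝ), deriv (w n) t = (1/2) * w n t *
      (pair (S (n+1) t) (Sb n t) + pair (S n t) (Sb (n+1) t)) :=
  fun n t => stmt17_general
    (J := fun k => pair (S (k+1) t) (Sb k t) + pair (S k t) (Sb (k+1) t))
    (hwd · t) (hw0 · t) (fun k => by simpa only [sub_add_cancel] using hveq k t)
    (fun k => .of_eq (funext (hwrec k))) (h0 t) n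
end
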